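/- arXiv:1808.05304 — 2 statements merged into one kernel-verified Lean document; each statement's English description precedes it below -/
import Mathlib

section
/- Let p ∈ P^log(ℝ^n), i.e. p is a measurable function on ℝ^n with 0 < p^- ≤ p(x) ≤ p^+ ≤ ∞ whose reciprocal 1/p is globally log-Hölder continuous, and write 1/p_∞ for the limit value of 1/p at infinity. Then there are constants (independent of x_0, r, x) such that for all x_0 ∈ ℝ^n and all r > 0 one has the equivalences ‖χ_{B_r(x_0)}‖_{L^{p(·)}(ℝ^n)} ≈ ‖χ_{Q_r(x_0)}‖_{L^{p(·)}(ℝ^n)} ≈ r^{n/p(x)} whenever r ≤ 1 and x ∈ B_r(x_0), and ‖χ_{B_r(x_0)}‖_{L^{p(·)}(ℝ^n)} ≈ ‖χ_{Q_r(x_0)}‖_{L^{p(·)}(ℝ^n)} ≈ r^{n/p_∞} whenever r ≥ 1. -/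
open MeasureTheory ENNReal Real
open scoped FourierTransform

noncomputable section

/-- Euclidean space `ℝ^n`. -/
abbrev Rn (n : ℕ) : Type := EuclideanSpace ℝ (Fin n)

variable {n : ℕ}

/-- The function `φ_t(s)` used in the semimodular of variable exponent Lebesgue spaces:
`φ_t(s) = s^t` for `t < ∞`, while `φ_∞(s) = 0` for `s ≤ 1` and `= ∞` for `s > 1`. -/
def phiVE (t : ℝ≥0∞) (s : ℝ≥0∞) : ℝ≥0∞ :=
  if t = ∞ then (if s ≤ 1 then 0 else ∞) else s ^ t.toReal

/-- The semimodular `ρ_p` of variable exponent Lebesgue spaces. -/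
def modularVE (p : Rn n → ℝ≥0∞) (g : Rn n → ℝ≥0∞) : ℝ≥0∞ :=
  ∫⁻ x, phiVE (p x) (g x)

/-- The variable exponent Lebesgue quasi-norm `‖·‖_{L^{p(·)}(ℝ^n)}`, applied to the
(pointwise) absolute value of a function, i.e. to `[0,∞]`-valued functions.
(For `p⁻ ≥ 1` this is the usual Luxemburg norm; for general `p` it agrees with the
definition via `‖f‖ = ‖|f|^t‖_{L^{p/t}}^{1/t}`.) -/
def vLpNorm (p : Rn n → ℝ≥0∞) (g : Rn n → ℝ≥0∞) : ℝ≥0∞ :=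
  sInf {lam : ℝ≥0∞ | modularVE p (fun x => g x / lam) ≤ 1}

/-- A variable exponent: a measurable function `p : ℝ^n → (0,∞]` with `p⁻ = ess inf p > 0`. -/
def IsVarExp (p : Rn n → ℝ≥0∞) : Prop :=
  Measurable p ∧ (∀ x, 0 < p x) ∧ 0 < essInf p (volume : Measure (Rn n))

/-- Local log-Hölder continuity of `g : ℝ^n → ℝ`. -/
def LocLogHolder (g : Rn n → ℝ) : Prop :=
  ∃ c > 0, ∀ x y : Rn n, |g x - g y| ≤ c / Real.log (Real.exp 1 + (dist x y)⁻¹)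

/-- Log-Hölder decay of `g` at infinity, with limit value `gInf` and constant `c`. -/
def LogDecay (g : Rn n → ℝ) (gInf c : ℝ) : Prop :=
  ∀ x : Rn n, |g x - gInf| ≤ c / Real.log (Real.exp 1 + ‖x‖)

/-- `p ∈ P^log(ℝ^n)`, with prescribed limit value `pinvInf = 1/p_∞` of `1/p` at infinity. -/
def IsPLogWith (p : Rn n → ℝ≥0∞) (pinvInf : ℝ) : Prop :=
  IsVarExp p ∧ LocLogHolder (fun x => (p x)⁻¹.toReal) ∧
    ∃ c > 0, LogDecay (fun x => (p x)⁻¹.toReal) pinvInf c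

/-- `p ∈ P^log(ℝ^n)`. -/
def IsPLog (p : Rn n → ℝ≥0∞) : Prop := ∃ pinvInf : ℝ, IsPLogWith p pinvInf

/-- The Morrey quasi-norm `‖·‖_{M^{u(·)}_{p(·)}(ℝ^n)}` of a `[0,∞]`-valued function:
`sup_{x, r>0} r^{n(1/u(x) - 1/p(x))} ‖f‖_{L^{p(·)}(B_r(x))}`. -/
def morreyNorm (p u : Rn n → ℝ≥0∞) (g : Rn n → ℝ≥0∞) : ℝ≥0∞ :=
  ⨆ (x : Rn n) (r : ℝ) (_ : 0 < r),
    ENNReal.ofReal (r ^ ((n : ℝ) * ((u x)⁻¹.toReal - (p x)⁻¹.toReal))) *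
      vLpNorm p ((Metric.ball x r).indicator g)

/-- The `ℓ^q` (quasi-)norm of a sequence in `[0,∞]`, with the usual modification for `q = ∞`. -/
def lqNorm (q : ℝ≥0∞) (a : ℕ → ℝ≥0∞) : ℝ≥0∞ :=
  if q = ∞ then ⨆ ν, a ν else (∑' ν, a ν ^ q.toReal) ^ (1 / q.toReal)

/-- The vector-valued Morrey quasi-norm `‖(f_ν)_ν‖_{M^{u(·)}_{p(·)}(ℓ^{q(·)})}`. -/
def morreySeqNorm (p u q : Rn n → ℝ≥0∞) (f : ℕ → Rn n → ℝ≥0∞) : ℝ≥0∞ :=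
  morreyNorm p u (fun x => lqNorm (q x) (fun ν => f ν x))

/-- The kernel `η_{ν,m}(x) = 2^{νn} (1 + 2^ν |x|)^{-m}`. -/
def etaK (ν : ℕ) (m : ℝ) (x : Rn n) : ℝ≥0∞ :=
  ENNReal.ofReal ((2 : ℝ) ^ (ν * n) * (1 + 2 ^ ν * ‖x‖) ^ (-m))

/-- Convolution of `[0,∞]`-valued functions. -/
def lconv (f g : Rn n → ℝ≥0∞) (x : Rn n) : ℝ≥0∞ := ∫⁻ y, f (x - y) * g y

/-- The constant `c_{p,u} = max(0, sup_x (1/p(x) - 1/u(x)) - 1/p_∞)`. -/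
def cpu (p u : Rn n → ℝ≥0∞) (pinvInf : ℝ) : ℝ :=
  max 0 ((⨆ x : Rn n, ((p x)⁻¹.toReal - (u x)⁻¹.toReal)) - pinvInf)

/-- The open cube `Q_r(x₀)` with center `x₀` and sides of length `2r` parallel to the axes. -/
def cubeO (x0 : Rn n) (r : ℝ) : Set (Rn n) := {y : Rn n | ∀ i, |y i - x0 i| < r}

/-!
If `∫_A s⁻¹ ≤ 1` and `s(x) ^ (1/p(x)) ≤ L` on `A`, then `‖χ_A‖ ≤ L`; the reversed inequalities
give `L ≤ ‖χ_A‖`. By monotonicity only balls matter, and `s` is chosen as follows, up to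
constants, which enter `s ^ (1/p)` boundedly because `1/p` is bounded.

* For `r ≤ 1` the constant weight `s = r ^ n` works in both directions: by local log-Hölder
  continuity `(r ^ n) ^ (1/p)` varies over a ball of radius comparable to `r` by a bounded factor.
* For `r ≥ 1` decay makes `(r ^ n) ^ (1/p(x))` comparable to `(r ^ n) ^ (1/p_∞)` only when `‖x‖` is
  comparable to `r` or larger. This suffices for the lower bound, since removing the ball of radius
  `r / 2` about the origin leaves at least half of the volume. For the upper bound the weight is
  lowered to `s(x) = min (r ^ n) ((1 + ‖x‖) ^ (n + 1))`: then `log s(x)` is at most a multiple of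
  `log (1 + ‖x‖)`, so `s(x) ^ (1/p(x))` is comparable to `s(x) ^ (1/p_∞) ≤ (r ^ n) ^ (1/p_∞)`, and
  `∫ s⁻¹` stays bounded because `(1 + ‖x‖) ^ (-n - 1)` is integrable.
-/

section Modular

variable {p : Rn n → ℝ≥0∞} {A : Set (Rn n)}

theorem monotone_phiVE (t : ℝ≥0∞) : Monotone (phiVE t) := by
  intro u v huv
  unfold phiVE
  split_ifs with ht hu hv hv
  · exact le_rfl
  · exact zero_le
  · exact absurd (huv.trans hv) hu
  · exact le_rfl
  · exact ENNReal.rpow_le_rpow huv ENNReal.toReal_nonneg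

theorem phiVE_le_of_le_rpow {t v w : ℝ≥0∞} (ht : 0 < t) (h : v ≤ w ^ t⁻¹.toReal) :
    phiVE t v ≤ w := by
  unfold phiVE
  split_ifs with ht_top hv
  · exact zero_le
  · simp [ht_top, hv] at h
  · have ht' : t.toReal ≠ 0 := (ENNReal.toReal_pos ht.ne' ht_top).ne'
    rw [ENNReal.toReal_inv] at h
    exact (ENNReal.rpow_le_rpow h ENNReal.toReal_nonneg).trans_eq (ENNReal.rpow_inv_rpow ht' w)

theorem le_phiVE_of_rpow_lt {t v w : ℝ≥0∞} (ht : 0 < t) (h : w ^ t⁻¹.toReal < v) :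
    w ≤ phiVE t v := by
  unfold phiVE
  split_ifs with ht_top hv
  · simp [ht_top, hv.not_gt] at h
  · exact le_top
  · have ht' : t.toReal ≠ 0 := (ENNReal.toReal_pos ht.ne' ht_top).ne'
    rw [ENNReal.toReal_inv] at h
    exact (ENNReal.rpow_inv_rpow ht' w).symm.trans_le
      (ENNReal.rpow_le_rpow h.le ENNReal.toReal_nonneg)

theorem modularVE_indicator_one_div (hp : ∀ x, 0 < p x) (hA : MeasurableSet A)
    (L : ℝ≥0∞) :
    modularVE p (fun x => A.indicator 1 x / L) = ∫⁻ x in A, phiVE (p x) L⁻¹ := by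
  unfold modularVE
  rw [← lintegral_indicator hA]
  refine lintegral_congr fun x => ?_
  by_cases hx : x ∈ A
  · simp [hx]
  · have hzero : phiVE (p x) 0 = 0 := nonpos_iff_eq_zero.1 (phiVE_le_of_le_rpow (hp x) zero_le)
    simp [hx, hzero]

theorem vLpNorm_mono (p : Rn n → ℝ≥0∞) : Monotone (vLpNorm p) := fun _ _ hfg =>
  sInf_le_sInf fun _ hL =>
    (lintegral_mono fun x => monotone_phiVE (p x) (ENNReal.div_le_div_right (hfg x) _)).trans hL

theorem vLpNorm_indicator_one_mono (p : Rn n → ℝ≥0∞) {B : Set (Rn n)} (hAB : A ⊆ B) :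
    vLpNorm p (A.indicator 1) ≤ vLpNorm p (B.indicator 1) :=
  vLpNorm_mono p (Set.indicator_le_indicator_of_subset hAB fun _ => zero_le)

theorem vLpNorm_indicator_one_le (hp : ∀ x, 0 < p x) (hA : MeasurableSet A)
    {s : Rn n → ℝ≥0∞} {L : ℝ≥0∞} (hs : ∫⁻ x in A, (s x)⁻¹ ≤ 1)
    (hL : ∀ x ∈ A, s x ^ (p x)⁻¹.toReal ≤ L) : vLpNorm p (A.indicator 1) ≤ L := by
  refine sInf_le ?_
  rw [Set.mem_ofPred_eq, modularVE_indicator_one_div hp hA]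
  refine (setLIntegral_mono' hA fun x hx => phiVE_le_of_le_rpow (hp x) ?_).trans hs
  rw [ENNReal.inv_rpow]
  exact ENNReal.inv_le_inv.2 (hL x hx)

theorem le_vLpNorm_indicator_one (hp : ∀ x, 0 < p x) (hA : MeasurableSet A)
    {s : Rn n → ℝ≥0∞} {L : ℝ≥0∞} (hs : 1 < ∫⁻ x in A, (s x)⁻¹)
    (hL : ∀ x ∈ A, L ≤ s x ^ (p x)⁻¹.toReal) : L ≤ vLpNorm p (A.indicator 1) := by
  refine le_sInf fun lam hlam => ?_
  rw [Set.mem_ofPred_eq, modularVE_indicator_one_div hp hA] at hlam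
  by_contra! hlt
  refine hs.not_ge ((setLIntegral_mono' hA fun x hx => le_phiVE_of_rpow_lt (hp x) ?_).trans hlam)
  rw [ENNReal.inv_rpow]
  exact ENNReal.inv_lt_inv.2 (hlt.trans_le (hL x hx))

theorem vLpNorm_indicator_one_le_of_lintegral_le (hp : ∀ x, 0 < p x) (hA : MeasurableSet A)
    {M H L : ℝ} (hM : ∀ x, (p x)⁻¹.toReal ≤ M)
    (hH : 1 ≤ H) {s : Rn n → ℝ} (hs : ∀ x, 0 < s x)
    (hint : ∫⁻ x in A, ENNReal.ofReal (s x)⁻¹ ≤ ENNReal.ofReal H)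
    (hL : ∀ x ∈ A, s x ^ (p x)⁻¹.toReal ≤ L) :
    vLpNorm p (A.indicator 1) ≤ ENNReal.ofReal (H ^ M * L) := by
  have hH0 : 0 < H := by linarith
  refine vLpNorm_indicator_one_le hp hA (s := fun x => ENNReal.ofReal (H * s x)) ?_ fun x hx => ?_
  · have hscale (x : Rn n) : (ENNReal.ofReal (H * s x))⁻¹ =
        ENNReal.ofReal H⁻¹ * ENNReal.ofReal (s x)⁻¹ := by
      rw [← ENNReal.ofReal_inv_of_pos (mul_pos hH0 (hs x)), mul_inv,
        ENNReal.ofReal_mul (inv_nonneg.2 hH0.le)]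
    simp only [hscale]
    rw [lintegral_const_mul' _ _ ENNReal.ofReal_ne_top, ENNReal.ofReal_inv_of_pos hH0]
    exact (mul_le_mul_right hint _).trans (ENNReal.inv_mul_le_one _)
  · rw [ENNReal.ofReal_rpow_of_pos (mul_pos hH0 (hs x)), Real.mul_rpow hH0.le (hs x).le]
    gcongr
    exacts [Real.rpow_nonneg (hs x).le _, hM x, hL x hx]

theorem le_vLpNorm_indicator_one_of_lt_volume (hp : ∀ x, 0 < p x) (hA : MeasurableSet A)
    {M η s L : ℝ} (hM : ∀ x, (p x)⁻¹.toReal ≤ M)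
    (hη : 0 < η) (hη1 : η ≤ 1) (hs : 0 < s) (hvol : ENNReal.ofReal (η * s) < volume A)
    (hL : ∀ x ∈ A, L ≤ s ^ (p x)⁻¹.toReal) :
    ENNReal.ofReal (η ^ M * L) ≤ vLpNorm p (A.indicator 1) := by
  refine le_vLpNorm_indicator_one hp hA (s := fun _ => ENNReal.ofReal (η * s)) ?_ fun x hx => ?_
  · rw [setLIntegral_const, mul_comm, ← div_eq_mul_inv,
      ENNReal.lt_div_iff_mul_lt (by left; positivity) (by simp), one_mul]
    exact hvol
  · rw [ENNReal.ofReal_rpow_of_pos (by positivity), Real.mul_rpow hη.le hs.le]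
    refine ENNReal.ofReal_le_ofReal ?_
    calc η ^ M * L ≤ η ^ M * s ^ (p x)⁻¹.toReal := by gcongr; exact hL x hx
      _ ≤ η ^ (p x)⁻¹.toReal * s ^ (p x)⁻¹.toReal := by
        gcongr ?_ * _
        exact Real.rpow_le_rpow_of_exponent_ge hη hη1 (hM x)

end Modular

section LogHolder

variable {g : Rn n → ℝ} {a c : ℝ}

theorem one_le_log_exp_one_add {u : ℝ} (hu : 0 ≤ u) : 1 ≤ Real.log (Real.exp 1 + u) := by
  rw [Real.le_log_iff_exp_le (by positivity)]
  linarith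

theorem rpow_le_exp_mul_rpow {s a b C : ℝ} (hs : 0 < s) (h : |a - b| * |Real.log s| ≤ C) :
    s ^ a ≤ Real.exp C * s ^ b := by
  rw [Real.rpow_def_of_pos hs, Real.rpow_def_of_pos hs, ← Real.exp_add, Real.exp_le_exp]
  have : (a - b) * Real.log s ≤ |a - b| * |Real.log s| := by
    rw [← abs_mul]
    exact le_abs_self _
  linarith

theorem LocLogHolder.exists_forall_le (hg : LocLogHolder g) : ∃ M, ∀ x, g x ≤ M := by
  obtain ⟨c, hc, h⟩ := hg
  refine ⟨g 0 + c, fun x => ?_⟩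
  have hlog : c / Real.log (Real.exp 1 + (dist x 0)⁻¹) ≤ c :=
    div_le_self hc.le (one_le_log_exp_one_add (by positivity))
  linarith [le_abs_self (g x - g 0), h x 0]

theorem neg_log_le_mul_log_exp_one_add_inv {K r d : ℝ} (hK : 1 ≤ K) (hr : 0 < r) (hd : 0 < d)
    (hdr : d ≤ K * r) :
    -Real.log r ≤ (Real.log K + 1) * Real.log (Real.exp 1 + d⁻¹) := by
  have hinv : r⁻¹ ≤ K * d⁻¹ := by
    rw [← div_eq_mul_inv, le_div_iff₀ hd, inv_mul_le_iff₀ hr, mul_comm]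
    exact hdr
  calc -Real.log r = Real.log r⁻¹ := (Real.log_inv r).symm
    _ ≤ Real.log (K * (Real.exp 1 + d⁻¹)) := by
      gcongr
      linarith [show 0 < K * Real.exp 1 by positivity]
    _ = Real.log K + Real.log (Real.exp 1 + d⁻¹) := Real.log_mul (by positivity) (by positivity)
    _ ≤ (Real.log K + 1) * Real.log (Real.exp 1 + d⁻¹) := by
      nlinarith [Real.log_nonneg hK, one_le_log_exp_one_add (inv_nonneg.2 hd.le)]

theorem LocLogHolder.exists_pow_rpow_le (hg : LocLogHolder g) {K : ℝ} (hK : 1 ≤ K)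
    (m : ℕ) :
    ∃ C > 0, ∀ r : ℝ, 0 < r → r ≤ 1 → ∀ x y : Rn n, dist x y ≤ K * r →
      (r ^ m) ^ g x ≤ C * (r ^ m) ^ g y := by
  obtain ⟨c, hc, h⟩ := hg
  have hlogK : 0 ≤ Real.log K := Real.log_nonneg hK
  refine ⟨Real.exp (c * (m * (Real.log K + 1))), Real.exp_pos _, fun r hr hr1 x y hxy =>
    rpow_le_exp_mul_rpow (by positivity) ?_⟩
  rcases eq_or_ne x y with rfl | hne
  · simp only [sub_self, abs_zero, zero_mul]
    positivity
  set l := Real.log (Real.exp 1 + (dist x y)⁻¹)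
  have hl : 0 < l := one_pos.trans_le (one_le_log_exp_one_add (by positivity))
  have hlog : |Real.log r| ≤ (Real.log K + 1) * l := by
    rw [abs_of_nonpos (Real.log_nonpos hr.le hr1)]
    exact neg_log_le_mul_log_exp_one_add_inv hK hr (dist_pos.2 hne) hxy
  calc |g x - g y| * |Real.log (r ^ m)| = |g x - g y| * (m * |Real.log r|) := by
        rw [Real.log_pow, abs_mul, Nat.abs_cast]
    _ ≤ c / l * (m * ((Real.log K + 1) * l)) := by gcongr; exact h x y
    _ = c * (m * (Real.log K + 1)) := by field_simp

theorem LogDecay.abs_sub_mul_log_le (h : LogDecay g a c) (x : Rn n) :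
    |g x - a| * Real.log (Real.exp 1 + ‖x‖) ≤ c :=
  (le_div_iff₀ (one_pos.trans_le (one_le_log_exp_one_add (norm_nonneg x)))).1 (h x)

theorem LogDecay.abs_sub_le (h : LogDecay g a c) (x : Rn n) : |g x - a| ≤ c :=
  (le_mul_of_one_le_right (abs_nonneg _) (one_le_log_exp_one_add (norm_nonneg x))).trans
    (h.abs_sub_mul_log_le x)

theorem LogDecay.limit_nonneg (h : LogDecay g a c) (hn : n ≠ 0) (hg : ∀ x, 0 ≤ g x) :
    0 ≤ a := by
  by_contra! ha
  have : NeZero n := ⟨hn⟩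
  obtain ⟨x, hx⟩ := NormedSpace.exists_lt_norm ℝ (Rn n) (Real.exp (c / -a))
  have hlog : c / -a < Real.log (Real.exp 1 + ‖x‖) := by
    rw [Real.lt_log_iff_exp_lt (by positivity)]
    linarith [Real.exp_pos 1]
  rw [div_lt_iff₀' (by linarith)] at hlog
  have hdist : -a ≤ |g x - a| := by linarith [hg x, le_abs_self (g x - a)]
  have hmul := mul_le_mul_of_nonneg_right hdist
    (zero_le_one.trans (one_le_log_exp_one_add (norm_nonneg x)))
  linarith [h.abs_sub_mul_log_le x]

theorem LogDecay.pow_rpow_le_of_le_norm (h : LogDecay g a c) {r : ℝ} (hr : 1 ≤ r) (m : ℕ)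
    {x : Rn n} (hx : r / 2 ≤ ‖x‖) :
    (r ^ m) ^ a ≤ Real.exp (2 * m * c) * (r ^ m) ^ g x := by
  refine rpow_le_exp_mul_rpow (by positivity) ?_
  have hlog : Real.log r ≤ 2 * Real.log (Real.exp 1 + ‖x‖) := by
    calc Real.log r ≤ Real.log ((Real.exp 1 + ‖x‖) ^ 2) := by
          gcongr
          nlinarith [Real.add_one_le_exp 1, norm_nonneg x]
      _ = 2 * Real.log (Real.exp 1 + ‖x‖) := by rw [Real.log_pow, Nat.cast_ofNat]
  calc |a - g x| * |Real.log (r ^ m)| = |g x - a| * (m * Real.log r) := by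
        rw [abs_sub_comm, Real.log_pow, abs_mul, Nat.abs_cast, abs_of_nonneg (Real.log_nonneg hr)]
    _ ≤ |g x - a| * (m * (2 * Real.log (Real.exp 1 + ‖x‖))) := by gcongr
    _ = 2 * m * (|g x - a| * Real.log (Real.exp 1 + ‖x‖)) := by ring
    _ ≤ 2 * m * c := by gcongr; exact h.abs_sub_mul_log_le x

theorem LogDecay.min_pow_rpow_le (h : LogDecay g a c) {s : ℝ} (hs : 1 ≤ s) (m : ℕ) (x : Rn n) :
    min s ((1 + ‖x‖) ^ m) ^ g x ≤ Real.exp (m * c) * min s ((1 + ‖x‖) ^ m) ^ a := by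
  have hmin : 1 ≤ min s ((1 + ‖x‖) ^ m) := le_min hs (one_le_pow₀ (by simp))
  refine rpow_le_exp_mul_rpow (by positivity) ?_
  calc |g x - a| * |Real.log (min s ((1 + ‖x‖) ^ m))|
      = |g x - a| * Real.log (min s ((1 + ‖x‖) ^ m)) := by
        rw [abs_of_nonneg (Real.log_nonneg hmin)]
    _ ≤ |g x - a| * Real.log ((Real.exp 1 + ‖x‖) ^ m) := by
        gcongr
        refine (min_le_right _ _).trans ?_
        gcongr
        linarith [Real.add_one_le_exp 1]
    _ = m * (|g x - a| * Real.log (Real.exp 1 + ‖x‖)) := by rw [Real.log_pow]; ring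
    _ ≤ m * c := by gcongr; exact h.abs_sub_mul_log_le x

end LogHolder

section BallsAndCubes

theorem exists_volume_ball_eq (n : ℕ) :
    ∃ V > 0, ∀ (x : Rn n) (r : ℝ), 0 < r →
      volume (Metric.ball x r) = ENNReal.ofReal (V * r ^ n) := by
  refine ⟨volume.real (Metric.ball (0 : Rn n) 1), ?_, fun x r hr => ?_⟩
  · exact ENNReal.toReal_pos (Metric.measure_ball_pos _ _ one_pos).ne' measure_ball_lt_top.ne
  · rw [Measure.addHaar_ball_of_pos _ _ hr, mul_comm, ENNReal.ofReal_mul measureReal_nonneg,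
      ofReal_measureReal, finrank_euclideanSpace_fin]

theorem volume_ball_div_two_le_volume_sdiff (hn : n ≠ 0) (x y : Rn n) {r : ℝ} (hr : 0 < r) :
    volume (Metric.ball x r) / 2 ≤ volume (Metric.ball x r \ Metric.ball y (r / 2)) := by
  have hball : volume (Metric.ball y (r / 2)) ≤ volume (Metric.ball x r) / 2 := by
    obtain ⟨V, hV, hvol⟩ := exists_volume_ball_eq n
    rw [hvol y _ (half_pos hr), hvol x r hr, ← ENNReal.ofReal_ofNat 2,
      ← ENNReal.ofReal_div_of_pos two_pos, div_pow, ← mul_div_assoc]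
    gcongr
    exact le_self_pow₀ one_le_two hn
  calc volume (Metric.ball x r) / 2
      = volume (Metric.ball x r) - volume (Metric.ball x r) / 2 :=
        (ENNReal.sub_half measure_ball_lt_top.ne).symm
    _ ≤ volume (Metric.ball x r) - volume (Metric.ball y (r / 2)) := by gcongr
    _ ≤ _ := le_measure_sdiff

theorem exists_lintegral_ball_inv_min_le (n : ℕ) {K : ℝ} (hK : 0 < K) :
    ∃ H ≥ 1, ∀ (x₀ : Rn n) (r : ℝ), 0 < r →
      ∫⁻ x in Metric.ball x₀ (K * r), ENNReal.ofReal (min (r ^ n) ((1 + ‖x‖) ^ (n + 1)))⁻¹ ≤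
        ENNReal.ofReal H := by
  obtain ⟨V, hV, hvol⟩ := exists_volume_ball_eq n
  set I := ∫⁻ x : Rn n, ENNReal.ofReal ((1 + ‖x‖) ^ (n + 1))⁻¹
  have hI : I ≠ ∞ := by
    have hfin : (Module.finrank ℝ (Rn n) : ℝ) < (n + 1 : ℕ) := by simp
    have hrpow (x : Rn n) : (1 + ‖x‖) ^ (-((n + 1 : ℕ) : ℝ)) = ((1 + ‖x‖) ^ (n + 1))⁻¹ := by
      rw [Real.rpow_neg (by positivity), Real.rpow_natCast]
    simpa only [hrpow] using (finite_integral_one_add_norm hfin).ne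
  refine ⟨1 + K ^ n * V + I.toReal, ?_, fun x₀ r hr => ?_⟩
  · have : 0 ≤ K ^ n * V + I.toReal := by positivity
    linarith
  have hmin (x : Rn n) : ENNReal.ofReal (min (r ^ n) ((1 + ‖x‖) ^ (n + 1)))⁻¹ ≤
      ENNReal.ofReal (r ^ n)⁻¹ + ENNReal.ofReal ((1 + ‖x‖) ^ (n + 1))⁻¹ := by
    rcases min_choice (r ^ n) ((1 + ‖x‖) ^ (n + 1)) with h | h <;> rw [h]
    exacts [le_self_add, le_add_self]
  calc _ ≤ ∫⁻ x in Metric.ball x₀ (K * r),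
          (ENNReal.ofReal (r ^ n)⁻¹ + ENNReal.ofReal ((1 + ‖x‖) ^ (n + 1))⁻¹) :=
        lintegral_mono fun x => hmin x
    _ = ENNReal.ofReal (r ^ n)⁻¹ * volume (Metric.ball x₀ (K * r)) +
          ∫⁻ x in Metric.ball x₀ (K * r), ENNReal.ofReal ((1 + ‖x‖) ^ (n + 1))⁻¹ := by
        rw [lintegral_add_left measurable_const, setLIntegral_const]
    _ ≤ ENNReal.ofReal (K ^ n * V) + I := by
        gcongr
        · rw [hvol _ _ (by positivity), ← ENNReal.ofReal_mul (by positivity)]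
          refine ENNReal.ofReal_le_ofReal (le_of_eq ?_)
          rw [mul_pow]
          field_simp
        · exact setLIntegral_le_lintegral _ _
    _ = ENNReal.ofReal (K ^ n * V + I.toReal) := by
        rw [ENNReal.ofReal_add (by positivity) ENNReal.toReal_nonneg, ENNReal.ofReal_toReal hI]
    _ ≤ _ := ENNReal.ofReal_le_ofReal (by linarith)

theorem ball_subset_cubeO (x₀ : Rn n) (r : ℝ) : Metric.ball x₀ r ⊆ cubeO x₀ r := by
  intro y hy i
  rw [mem_ball_iff_norm] at hy
  exact (PiLp.norm_apply_le (y - x₀) i).trans_lt hy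

theorem cubeO_subset_ball (x₀ : Rn n) {r : ℝ} (hr : 0 < r) :
    cubeO x₀ r ⊆ Metric.ball x₀ ((n + 1) * r) := by
  intro y hy
  rw [mem_ball_iff_norm, EuclideanSpace.norm_eq, Real.sqrt_lt' (by positivity)]
  calc ∑ i, ‖(y - x₀) i‖ ^ 2 ≤ ∑ _i : Fin n, r ^ 2 := by
        gcongr with i
        exact (hy i).le
    _ = n * r ^ 2 := by simp
    _ < (n + 1) ^ 2 * r ^ 2 := by
        gcongr
        nlinarith [n.cast_nonneg (α := ℝ)]
    _ = ((n + 1) * r) ^ 2 := (mul_pow _ _ 2).symm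

end BallsAndCubes

section IndicatorNorm

variable {p : Rn n → ℝ≥0∞} {a c : ℝ}

theorem exists_le_vLpNorm_ball_of_le_one (hp : ∀ x, 0 < p x)
    (hg : LocLogHolder fun x => (p x)⁻¹.toReal) :
    ∃ C > 0, ∀ (x₀ : Rn n) (r : ℝ), 0 < r → r ≤ 1 → ∀ x ∈ Metric.ball x₀ r,
      ENNReal.ofReal (C * r ^ ((n : ℝ) * (p x)⁻¹.toReal)) ≤
        vLpNorm p ((Metric.ball x₀ r).indicator 1) := by
  obtain ⟨M, hM⟩ := hg.exists_forall_le
  obtain ⟨C, hC, hcomp⟩ := hg.exists_pow_rpow_le one_le_two n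
  obtain ⟨V, hV, hvol⟩ := exists_volume_ball_eq n
  refine ⟨min 1 (V / 2) ^ M * C⁻¹, by positivity, fun x₀ r hr hr1 x hx => ?_⟩
  rw [Real.rpow_natCast_mul hr.le, mul_assoc]
  refine le_vLpNorm_indicator_one_of_lt_volume hp measurableSet_ball hM
    (lt_min one_pos (half_pos hV)) (min_le_left _ _) (pow_pos hr n) ?_ fun y hy => ?_
  · rw [hvol x₀ r hr, ENNReal.ofReal_lt_ofReal_iff (by positivity)]
    gcongr
    exact (min_le_right _ _).trans_lt (half_lt_self hV)
  · rw [inv_mul_le_iff₀ hC]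
    refine hcomp r hr hr1 x y ?_
    rw [Metric.mem_ball] at hx hy
    linarith [dist_triangle_right x y x₀]

theorem exists_vLpNorm_ball_le_of_le_one (hp : ∀ x, 0 < p x)
    (hg : LocLogHolder fun x => (p x)⁻¹.toReal) {K : ℝ} (hK : 1 ≤ K) :
    ∃ C > 0, ∀ (x₀ : Rn n) (r : ℝ), 0 < r → r ≤ 1 → ∀ x ∈ Metric.ball x₀ r,
      vLpNorm p ((Metric.ball x₀ (K * r)).indicator 1) ≤
        ENNReal.ofReal (C * r ^ ((n : ℝ) * (p x)⁻¹.toReal)) := by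
  obtain ⟨M, hM⟩ := hg.exists_forall_le
  obtain ⟨C, hC, hcomp⟩ := hg.exists_pow_rpow_le (show 1 ≤ 2 * K by linarith) n
  obtain ⟨V, hV, hvol⟩ := exists_volume_ball_eq n
  refine ⟨(1 + V * K ^ n) ^ M * C, by positivity, fun x₀ r hr hr1 x hx => ?_⟩
  rw [Real.rpow_natCast_mul hr.le, mul_assoc]
  refine vLpNorm_indicator_one_le_of_lintegral_le hp measurableSet_ball hM
    (le_add_of_nonneg_right (by positivity)) (fun _ => pow_pos hr n) ?_ fun y hy => ?_
  · rw [setLIntegral_const, hvol _ _ (by positivity), ← ENNReal.ofReal_mul (by positivity)]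
    refine ENNReal.ofReal_le_ofReal ?_
    rw [mul_pow]
    field_simp
    linarith
  · refine hcomp r hr hr1 y x ?_
    rw [Metric.mem_ball] at hx hy
    nlinarith [dist_triangle_right y x x₀]

theorem LogDecay.exists_subset_ball_pow_rpow_le {g : Rn n → ℝ} (h : LogDecay g a c)
    (x₀ : Rn n) {r : ℝ} (hr : 1 ≤ r) :
    ∃ B ⊆ Metric.ball x₀ r, MeasurableSet B ∧ volume (Metric.ball x₀ r) / 2 ≤ volume B ∧
      ∀ x ∈ B, (r ^ n) ^ a ≤ Real.exp (2 * n * c) * (r ^ n) ^ g x := by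
  rcases eq_or_ne n 0 with rfl | hn
  · exact ⟨_, subset_rfl, measurableSet_ball, ENNReal.half_le_self, by simp⟩
  · refine ⟨_, Set.sdiff_subset, measurableSet_ball.diff measurableSet_ball,
      volume_ball_div_two_le_volume_sdiff hn x₀ 0 (by positivity), fun x hx => ?_⟩
    exact h.pow_rpow_le_of_le_norm hr n (not_lt.1 fun hlt => hx.2 (mem_ball_zero_iff.2 hlt))

theorem exists_le_vLpNorm_ball_of_one_le (hp : ∀ x, 0 < p x)
    (hg : LogDecay (fun x => (p x)⁻¹.toReal) a c) :
    ∃ C > 0, ∀ (x₀ : Rn n) (r : ℝ), 1 ≤ r →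
      ENNReal.ofReal (C * r ^ ((n : ℝ) * a)) ≤
        vLpNorm p ((Metric.ball x₀ r).indicator 1) := by
  have hM (x : Rn n) : (p x)⁻¹.toReal ≤ a + c := by linarith [le_of_abs_le (hg.abs_sub_le x)]
  obtain ⟨V, hV, hvol⟩ := exists_volume_ball_eq n
  refine ⟨min 1 (V / 4) ^ (a + c) * (Real.exp (2 * n * c))⁻¹, by positivity, fun x₀ r hr => ?_⟩
  have hr0 : 0 < r := by positivity
  obtain ⟨B, hBsub, hBmeas, hBvol, hB⟩ := hg.exists_subset_ball_pow_rpow_le x₀ hr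
  rw [Real.rpow_natCast_mul hr0.le, mul_assoc]
  refine (le_vLpNorm_indicator_one_of_lt_volume hp hBmeas hM (lt_min one_pos (by positivity))
    (min_le_left _ _) (pow_pos hr0 n) ?_ fun y hy => ?_).trans (vLpNorm_indicator_one_mono p hBsub)
  · refine lt_of_lt_of_le ?_ hBvol
    rw [hvol x₀ r hr0, ← ENNReal.ofReal_ofNat 2, ← ENNReal.ofReal_div_of_pos two_pos,
      ENNReal.ofReal_lt_ofReal_iff (by positivity), mul_div_right_comm]
    gcongr
    exact (min_le_right _ _).trans_lt (by linarith)
  · rw [inv_mul_le_iff₀ (Real.exp_pos _)]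
    exact hB y hy

theorem exists_vLpNorm_ball_le_of_one_le (hp : ∀ x, 0 < p x)
    (hg : LogDecay (fun x => (p x)⁻¹.toReal) a c) {K : ℝ} (hK : 0 < K) :
    ∃ C > 0, ∀ (x₀ : Rn n) (r : ℝ), 1 ≤ r →
      vLpNorm p ((Metric.ball x₀ (K * r)).indicator 1) ≤
        ENNReal.ofReal (C * r ^ ((n : ℝ) * a)) := by
  have hM (x : Rn n) : (p x)⁻¹.toReal ≤ a + c := by linarith [le_of_abs_le (hg.abs_sub_le x)]
  obtain ⟨H, hH, hint⟩ := exists_lintegral_ball_inv_min_le n hK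
  refine ⟨H ^ (a + c) * Real.exp ((n + 1 : ℕ) * c), by positivity, fun x₀ r hr => ?_⟩
  have hr0 : 0 < r := by positivity
  rw [Real.rpow_natCast_mul hr0.le, mul_assoc]
  refine vLpNorm_indicator_one_le_of_lintegral_le hp measurableSet_ball hM hH
    (fun x => by positivity) (hint x₀ r hr0) fun x _ => ?_
  refine (hg.min_pow_rpow_le (one_le_pow₀ hr) (n + 1) x).trans ?_
  gcongr ?_ * ?_
  rcases eq_or_ne n 0 with rfl | hn
  · simp
  · exact Real.rpow_le_rpow (by positivity) (min_le_left _ _)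
      (hg.limit_nonneg hn fun _ => ENNReal.toReal_nonneg)

theorem IsPLogWith.exists_vLpNorm_indicator_bounds (hp : IsPLogWith p a) {K : ℝ} (hK : 1 ≤ K) :
    ∃ c₁ c₂ : ℝ, 0 < c₁ ∧ 0 < c₂ ∧ ∀ (x₀ : Rn n) (r : ℝ), 0 < r → ∀ A : Set (Rn n),
      Metric.ball x₀ r ⊆ A → A ⊆ Metric.ball x₀ (K * r) →
        (r ≤ 1 → ∀ x ∈ Metric.ball x₀ r,
          ENNReal.ofReal (c₁ * r ^ ((n : ℝ) * (p x)⁻¹.toReal)) ≤ vLpNorm p (A.indicator 1) ∧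
          vLpNorm p (A.indicator 1) ≤ ENNReal.ofReal (c₂ * r ^ ((n : ℝ) * (p x)⁻¹.toReal))) ∧
        (1 ≤ r →
          ENNReal.ofReal (c₁ * r ^ ((n : ℝ) * a)) ≤ vLpNorm p (A.indicator 1) ∧
          vLpNorm p (A.indicator 1) ≤ ENNReal.ofReal (c₂ * r ^ ((n : ℝ) * a))) := by
  obtain ⟨⟨-, hpos, -⟩, hloc, c, -, hdecay⟩ := hp
  obtain ⟨a₁, ha₁, hsmall_lower⟩ := exists_le_vLpNorm_ball_of_le_one hpos hloc
  obtain ⟨a₂, ha₂, hsmall_upper⟩ := exists_vLpNorm_ball_le_of_le_one hpos hloc hK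
  obtain ⟨b₁, hb₁, hlarge_lower⟩ := exists_le_vLpNorm_ball_of_one_le hpos hdecay
  obtain ⟨b₂, -, hlarge_upper⟩ := exists_vLpNorm_ball_le_of_one_le hpos hdecay (by positivity)
  refine ⟨min a₁ b₁, max a₂ b₂, lt_min ha₁ hb₁, lt_max_of_lt_left ha₂, fun x₀ r hr A hrA hAK =>
    ⟨fun hr1 x hx => ⟨?_, ?_⟩, fun hr1 => ⟨?_, ?_⟩⟩⟩
  · refine le_trans ?_ ((hsmall_lower x₀ r hr hr1 x hx).trans (vLpNorm_indicator_one_mono p hrA))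
    gcongr
    exact min_le_left _ _
  · refine ((vLpNorm_indicator_one_mono p hAK).trans (hsmall_upper x₀ r hr hr1 x hx)).trans ?_
    gcongr
    exact le_max_left _ _
  · refine le_trans ?_ ((hlarge_lower x₀ r hr1).trans (vLpNorm_indicator_one_mono p hrA))
    gcongr
    exact min_le_right _ _
  · refine ((vLpNorm_indicator_one_mono p hAK).trans (hlarge_upper x₀ r hr1)).trans ?_
    gcongr
    exact le_max_right _ _

end IndicatorNorm

/-- norms of characteristic functions of balls and cubes in variable
exponent Lebesgue spaces. -/
theorem statement0 (n : ℕ) (p : Rn n → ℝ≥0∞) (pinvInf : ℝ)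
    (hp : IsPLogWith p pinvInf) :
    ∃ c₁ c₂ : ℝ, 0 < c₁ ∧ 0 < c₂ ∧
      ∀ (x0 : Rn n) (r : ℝ), 0 < r →
        ((r ≤ 1 → ∀ x ∈ Metric.ball x0 r,
          (ENNReal.ofReal (c₁ * r ^ ((n : ℝ) * (p x)⁻¹.toReal)) ≤
              vLpNorm p ((Metric.ball x0 r).indicator 1) ∧
            vLpNorm p ((Metric.ball x0 r).indicator 1) ≤
              ENNReal.ofReal (c₂ * r ^ ((n : ℝ) * (p x)⁻¹.toReal))) ∧
          (ENNReal.ofReal (c₁ * r ^ ((n : ℝ) * (p x)⁻¹.toReal)) ≤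
              vLpNorm p ((cubeO x0 r).indicator 1) ∧
            vLpNorm p ((cubeO x0 r).indicator 1) ≤
              ENNReal.ofReal (c₂ * r ^ ((n : ℝ) * (p x)⁻¹.toReal)))) ∧
        (1 ≤ r →
          (ENNReal.ofReal (c₁ * r ^ ((n : ℝ) * pinvInf)) ≤
              vLpNorm p ((Metric.ball x0 r).indicator 1) ∧
            vLpNorm p ((Metric.ball x0 r).indicator 1) ≤
              ENNReal.ofReal (c₂ * r ^ ((n : ℝ) * pinvInf))) ∧
          (ENNReal.ofReal (c₁ * r ^ ((n : ℝ) * pinvInf)) ≤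
              vLpNorm p ((cubeO x0 r).indicator 1) ∧
            vLpNorm p ((cubeO x0 r).indicator 1) ≤
              ENNReal.ofReal (c₂ * r ^ ((n : ℝ) * pinvInf))))) := by
  obtain ⟨c₁, c₂, hc₁, hc₂, hbounds⟩ :=
    hp.exists_vLpNorm_indicator_bounds (show (1 : ℝ) ≤ n + 1 by simp)
  refine ⟨c₁, c₂, hc₁, hc₂, fun x0 r hr => ?_⟩
  have hball : Metric.ball x0 r ⊆ Metric.ball x0 ((n + 1) * r) :=
    (ball_subset_cubeO x0 r).trans (cubeO_subset_ball x0 hr)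
  obtain ⟨hball_small, hball_large⟩ := hbounds x0 r hr _ subset_rfl hball
  obtain ⟨hcube_small, hcube_large⟩ :=
    hbounds x0 r hr _ (ball_subset_cubeO x0 r) (cubeO_subset_ball x0 hr)
  exact ⟨fun hr1 x hx => ⟨hball_small hr1 x hx, hcube_small hr1 x hx⟩,
    fun hr1 => ⟨hball_large hr1, hcube_large hr1⟩⟩

end
end

section
/- Let η_{ν,m}(x) := 2^{νn}(1 + 2^ν|x|)^{−m} for ν ∈ ℕ_0 and m > 0. Let p, q ∈ P^log(ℝ^n) with 1 < p^- ≤ p^+ < ∞ and 1 < q^- ≤ q^+ < ∞. Then for every m > n there exists a constant c > 0 such that for all sequences (f_ν)_{ν∈ℕ_0} of measurable functions on ℝ^n one has ‖(∑_{ν=0}^∞ |(η_{ν,m} ∗ f_ν)(·)|^{q(·)})^{1/q(·)}‖_{L^{p(·)}(ℝ^n)} ≤ c ‖(∑_{ν=0}^∞ |f_ν(·)|^{q(·)})^{1/q(·)}‖_{L^{p(·)}(ℝ^n)}. -/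
open MeasureTheory ENNReal Real
open scoped FourierTransform

noncomputable section

variable {n : ℕ}

/-
Write `F`, `U` for the pointwise `ℓ^q` norms of `(f_ν)` and of `(η_ν ∗ f_ν)`, and `M` for the dyadic
maximal operator. By duality it suffices to bound `∫ G * U` for test functions `G` whose conjugate
modular is at most `1`. Norming the `ℓ^q` norm pointwise gives
`U = ∑_ν (η_ν ∗ f_ν) * t_ν ^ (q - 1)` with `∑_ν t_ν ^ q ≤ 1`. Put `f_ν = F * a_ν` with
`∑_ν a_ν ^ q ≤ 1`; Young's inequality splits `a_ν(y) * t_ν ^ (q(x) - 1)` into `a_ν(y) ^ q(x)` and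
`t_ν ^ q(x)`, and log-Hölder continuity of `q` replaces `a_ν(y) ^ q(x)` by `a_ν(y) ^ q(y)`, at the
cost of some decay of the kernel and a summable error. The `t_ν` and error terms are dominated by
`M F`. The remaining one, `∑_ν η_ν ∗ (F * a_ν ^ q)`, is integrated against `G` by moving the even
kernel onto `G`, which gives at most `∫ F * M G`. Thus
`∫ G * U ≤ C * (∫ G * M F + ∫ F * M G)`, and the maximal theorem for the exponents `p` and `p'`
bounds the right-hand side. Truncating the sequence provides the finiteness of `∫ U ^ p` which the
duality argument presupposes.
-/

lemma rpow_eq_mul_rpow_sub_one {s : ℝ} (hs : 1 ≤ s) (x : ℝ≥0∞) : x ^ s = x * x ^ (s - 1) := by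
  conv_lhs => rw [← add_sub_cancel 1 s,
    ENNReal.rpow_add_of_nonneg _ _ zero_le_one (sub_nonneg.2 hs), ENNReal.rpow_one]

section LayerCake

variable {α : Type*} [MeasurableSpace α]

lemma lintegral_rpow_eq_lintegral_meas_ofReal_lt_mul (μ : Measure α) {f : α → ℝ≥0∞}
    (hf : Measurable f) {s : ℝ} (hs : 0 < s) :
    ∫⁻ x, f x ^ s ∂μ = ENNReal.ofReal s *
      ∫⁻ t in Set.Ioi (0 : ℝ), μ {x | ENNReal.ofReal t < f x} * ENNReal.ofReal (t ^ (s - 1)) := by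
  by_cases hfin : ∀ᵐ x ∂μ, f x ≠ ∞
  · have hrpow : ∀ᵐ x ∂μ, f x ^ s = ENNReal.ofReal ((f x).toReal ^ s) := by
      filter_upwards [hfin] with x hx
      rw [← ENNReal.ofReal_rpow_of_nonneg toReal_nonneg hs.le, ENNReal.ofReal_toReal hx]
    rw [lintegral_congr_ae hrpow, lintegral_rpow_eq_lintegral_meas_lt_mul μ
      (ae_of_all _ fun _ => toReal_nonneg) hf.ennreal_toReal.aemeasurable hs]
    congr 1
    refine setLIntegral_congr_fun measurableSet_Ioi fun t ht => ?_
    refine congrArg (· * _) (measure_congr ?_)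
    filter_upwards [hfin] with x hx
    exact propext (ENNReal.ofReal_lt_iff_lt_toReal (le_of_lt ht) hx).symm
  · have htop : μ {x | f x = ∞} ≠ 0 := by simpa [ae_iff] using hfin
    have hpow : ∫⁻ t in Set.Ioi (0 : ℝ), ENNReal.ofReal (t ^ (s - 1)) = ∞ := by
      by_contra hne
      refine not_integrableOn_Ioi_rpow (s - 1) ((lintegral_ofReal_ne_top_iff_integrable
        (by fun_prop) ?_).1 hne)
      filter_upwards [ae_restrict_mem measurableSet_Ioi] with t ht using rpow_nonneg (le_of_lt ht) _
    have hleft : ∫⁻ x, f x ^ s ∂μ = ∞ :=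
      lintegral_eq_top_of_measure_eq_top_ne_zero (hf.pow_const s).aemeasurable
        (by simpa [ENNReal.rpow_eq_top_iff_of_pos hs] using htop)
    have hright : ∫⁻ t in Set.Ioi (0 : ℝ), μ {x | f x = ∞} * ENNReal.ofReal (t ^ (s - 1)) ≤
        ∫⁻ t in Set.Ioi (0 : ℝ),
          μ {x | ENNReal.ofReal t < f x} * ENNReal.ofReal (t ^ (s - 1)) := by
      gcongr with t x
      rintro hx
      exact hx ▸ ofReal_lt_top
    rw [lintegral_const_mul _ (by fun_prop), hpow, ENNReal.mul_top htop, top_le_iff] at hright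
    rw [hleft, hright, ENNReal.mul_top (ENNReal.ofReal_pos.2 hs).ne']

lemma lintegral_rpow_le_of_mul_meas_lt_le {μ : Measure α} {F M : α → ℝ≥0∞} (hF : Measurable F)
    (hM : Measurable M) {A : ℝ≥0∞} {r : ℝ} (hr : 1 < r)
    (h : ∀ t, t * μ {x | t < M x} ≤ A * ∫⁻ x in {x | t < 2 * F x}, F x ∂μ) :
    ∫⁻ x, M x ^ r ∂μ ≤
      ENNReal.ofReal r * A * (ENNReal.ofReal (r - 1))⁻¹ * 2 ^ (r - 1) * ∫⁻ x, F x ^ r ∂μ := by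
  have hr' : 0 < r - 1 := sub_pos.2 hr
  have h2F : Measurable fun x => 2 * F x := hF.const_mul 2
  have hlayer : ∀ t ∈ Set.Ioi (0 : ℝ),
      μ {x | ENNReal.ofReal t < M x} * ENNReal.ofReal (t ^ (r - 1)) ≤
        A * (μ.withDensity F {x | ENNReal.ofReal t < 2 * F x} *
          ENNReal.ofReal (t ^ (r - 1 - 1))) := by
    intro t ht
    have hsplit : ENNReal.ofReal (t ^ (r - 1)) =
        ENNReal.ofReal t * ENNReal.ofReal (t ^ (r - 1 - 1)) := by
      rw [← ENNReal.ofReal_mul (le_of_lt ht), mul_comm, ← Real.rpow_add_one (ne_of_gt ht),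
        sub_add_cancel]
    rw [hsplit, withDensity_apply _ (measurableSet_lt measurable_const h2F), ← mul_assoc,
      ← mul_assoc, mul_comm (μ _)]
    exact mul_le_mul_left (h _) _
  have hdensity : ∫⁻ x, (2 * F x) ^ (r - 1) ∂(μ.withDensity F) =
      2 ^ (r - 1) * ∫⁻ x, F x ^ r ∂μ := by
    rw [lintegral_withDensity_eq_lintegral_mul _ hF (h2F.pow_const _),
      ← lintegral_const_mul _ (hF.pow_const r)]
    refine lintegral_congr fun x => ?_
    rw [Pi.mul_apply, ENNReal.mul_rpow_of_nonneg _ _ hr'.le, rpow_eq_mul_rpow_sub_one hr.le (F x),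
      mul_left_comm]
  have hmeas : Measurable fun t : ℝ => μ.withDensity F {x | ENNReal.ofReal t < 2 * F x} :=
    Antitone.measurable fun s t hst =>
      measure_mono fun x hx => (ENNReal.ofReal_le_ofReal hst).trans_lt hx
  calc ∫⁻ x, M x ^ r ∂μ
      = ENNReal.ofReal r * ∫⁻ t in Set.Ioi (0 : ℝ),
          μ {x | ENNReal.ofReal t < M x} * ENNReal.ofReal (t ^ (r - 1)) :=
        lintegral_rpow_eq_lintegral_meas_ofReal_lt_mul μ hM (zero_lt_one.trans hr)
    _ ≤ ENNReal.ofReal r * ∫⁻ t in Set.Ioi (0 : ℝ),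
          A * (μ.withDensity F {x | ENNReal.ofReal t < 2 * F x} *
            ENNReal.ofReal (t ^ (r - 1 - 1))) := by
        gcongr ENNReal.ofReal r * ?_
        exact setLIntegral_mono' measurableSet_Ioi hlayer
    _ = ENNReal.ofReal r * A * (ENNReal.ofReal (r - 1))⁻¹ *
          ∫⁻ x, (2 * F x) ^ (r - 1) ∂(μ.withDensity F) := by
        rw [lintegral_rpow_eq_lintegral_meas_ofReal_lt_mul _ h2F hr', ← mul_assoc (_ * _ * _),
          ENNReal.inv_mul_cancel_right (ENNReal.ofReal_pos.2 hr').ne' ofReal_ne_top,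
          lintegral_const_mul _ (by fun_prop), mul_assoc]
    _ = _ := by rw [hdensity, ← mul_assoc]

end LayerCake

section Maximal

lemma setLAverage_add_left {α : Type*} [MeasurableSpace α] (μ : Measure α) (s : Set α)
    {F : α → ℝ≥0∞} (hF : Measurable F) (G : α → ℝ≥0∞) :
    ⨍⁻ x in s, (F x + G x) ∂μ = ⨍⁻ x in s, F x ∂μ + ⨍⁻ x in s, G x ∂μ := by
  simp only [setLAverage_eq, lintegral_add_left hF, ENNReal.add_div]

section MetricSpace

variable {E : Type*} [PseudoMetricSpace E] [MeasurableSpace E] (μ : Measure E)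

/-- The centred Hardy–Littlewood maximal function restricted to dyadic radii; up to a constant
factor this is the full centred maximal function, and the countable supremum makes its
measurability immediate. -/
def dyadicMaximal (F : E → ℝ≥0∞) (x : E) : ℝ≥0∞ := ⨆ j : ℤ, ⨍⁻ y in Metric.ball x (2 ^ j), F y ∂μ

lemma setLAverage_ball_zpow_le_dyadicMaximal (F : E → ℝ≥0∞) (x : E) (j : ℤ) :
    ⨍⁻ y in Metric.ball x (2 ^ j), F y ∂μ ≤ dyadicMaximal μ F x :=
  le_iSup (fun j : ℤ => ⨍⁻ y in Metric.ball x (2 ^ j), F y ∂μ) j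

lemma dyadicMaximal_mono {F G : E → ℝ≥0∞} (h : ∀ x, F x ≤ G x) (x : E) :
    dyadicMaximal μ F x ≤ dyadicMaximal μ G x :=
  iSup_mono fun _ => laverage_mono_ae (ae_of_all _ h)

lemma dyadicMaximal_add_le {F : E → ℝ≥0∞} (hF : Measurable F) (G : E → ℝ≥0∞) (x : E) :
    dyadicMaximal μ (fun y => F y + G y) x ≤ dyadicMaximal μ F x + dyadicMaximal μ G x := by
  refine iSup_le fun j => ?_
  rw [setLAverage_add_left μ _ hF]
  gcongr <;> exact setLAverage_ball_zpow_le_dyadicMaximal μ _ x j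

variable [ProperSpace E] [IsFiniteMeasureOnCompacts μ] [μ.IsOpenPosMeasure]

lemma setLAverage_ball_const (x : E) {r : ℝ} (hr : 0 < r) (c : ℝ≥0∞) :
    ⨍⁻ _ in Metric.ball x r, c ∂μ = c :=
  setLAverage_const (Metric.measure_ball_pos μ x hr).ne' measure_ball_lt_top.ne c

lemma dyadicMaximal_const (c : ℝ≥0∞) (x : E) : dyadicMaximal μ (fun _ => c) x = c := by
  simp only [dyadicMaximal, setLAverage_ball_const μ x (zpow_pos two_pos _), ciSup_const]

end MetricSpace

lemma exists_countable_pairwiseDisjoint_ball_subset_iUnion {α : Type*} [PseudoMetricSpace α]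
    [SecondCountableTopology α] {s : Set α} {r : α → ℝ} {R : ℝ} (hpos : ∀ x ∈ s, 0 < r x)
    (hR : ∀ x ∈ s, r x ≤ R) :
    ∃ u ⊆ s, u.Countable ∧ u.PairwiseDisjoint (fun x => Metric.ball x (r x)) ∧
      s ⊆ ⋃ x ∈ u, Metric.ball x (3 * r x) := by
  obtain ⟨u, hus, hdisj, hcov⟩ := Vitali.exists_disjoint_subfamily_covering_enlargement
    (fun x => Metric.ball x (r x)) s r 2 one_lt_two (fun x hx => (hpos x hx).le) R hR
    (fun x hx => Metric.nonempty_ball.2 (hpos x hx))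
  refine ⟨u, hus, hdisj.countable_of_isOpen (fun _ _ => Metric.isOpen_ball)
    (fun x hx => Metric.nonempty_ball.2 (hpos x (hus hx))), hdisj, fun x hx => ?_⟩
  obtain ⟨b, hb, ⟨z, hzx, hzb⟩, hle⟩ := hcov x hx
  refine Set.mem_iUnion₂.2 ⟨b, hb, ?_⟩
  rw [Metric.mem_ball] at hzx hzb ⊢
  linarith [dist_triangle_left x b z]

variable {E : Type*} [NormedAddCommGroup E] [NormedSpace ℝ E] [FiniteDimensional ℝ E]
  [MeasurableSpace E] [BorelSpace E] (μ : Measure E) [μ.IsAddHaarMeasure]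

lemma measurable_dyadicMaximal (F : E → ℝ≥0∞) : Measurable (dyadicMaximal μ F) := by
  refine Measurable.iSup fun j => ?_
  have hball : ∀ x : E, ∫⁻ y in Metric.ball x (2 ^ j), F y ∂μ =
      μ.withDensity F (Prod.mk x ⁻¹' {z : E × E | dist z.2 z.1 < 2 ^ j}) := fun x =>
    (withDensity_apply _ Metric.isOpen_ball.measurableSet).symm
  simp only [setLAverage_eq, Measure.addHaar_ball_center μ _ _, hball]
  exact (measurable_measure_prodMk_left (measurableSet_lt (by fun_prop) (by fun_prop))).div_const _

lemma mul_measure_le_of_forall_lt_setLAverage_ball (F : E → ℝ≥0∞) (t : ℝ≥0∞) {s : Set E}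
    {r : E → ℝ} {R : ℝ} (hpos : ∀ x ∈ s, 0 < r x) (hR : ∀ x ∈ s, r x ≤ R)
    (ht : ∀ x ∈ s, t < ⨍⁻ y in Metric.ball x (r x), F y ∂μ) :
    t * μ s ≤ 3 ^ Module.finrank ℝ E * ∫⁻ y, F y ∂μ := by
  obtain ⟨u, hus, hcount, hdisj, hcov⟩ :=
    exists_countable_pairwiseDisjoint_ball_subset_iUnion hpos hR
  have hball : ∀ x ∈ u, t * μ (Metric.ball x (3 * r x)) ≤
      3 ^ Module.finrank ℝ E * ∫⁻ y in Metric.ball x (r x), F y ∂μ := by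
    intro x hx
    rw [Measure.addHaar_ball_mul_of_pos μ x three_pos, ← Measure.addHaar_ball_center μ x,
      ENNReal.ofReal_pow three_pos.le, ENNReal.ofReal_ofNat, mul_left_comm, mul_comm t,
      ← measure_mul_setLAverage F measure_ball_lt_top.ne]
    gcongr
    exact (ht x (hus hx)).le
  calc t * μ s ≤ t * ∑' x : u, μ (Metric.ball (x : E) (3 * r x)) := by
        gcongr
        exact (measure_mono hcov).trans (measure_biUnion_le _ hcount _)
    _ = ∑' x : u, t * μ (Metric.ball (x : E) (3 * r x)) := ENNReal.tsum_mul_left.symm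
    _ ≤ ∑' x : u, 3 ^ Module.finrank ℝ E * ∫⁻ y in Metric.ball (x : E) (r x), F y ∂μ :=
        ENNReal.tsum_le_tsum fun x => hball x x.2
    _ = 3 ^ Module.finrank ℝ E * ∫⁻ y in ⋃ x ∈ u, Metric.ball x (r x), F y ∂μ := by
        rw [ENNReal.tsum_mul_left, lintegral_biUnion hcount (fun _ _ => measurableSet_ball) hdisj]
    _ ≤ 3 ^ Module.finrank ℝ E * ∫⁻ y, F y ∂μ := by
        gcongr
        exact Measure.restrict_le_self

lemma mul_measure_lt_dyadicMaximal_le (F : E → ℝ≥0∞) (t : ℝ≥0∞) :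
    t * μ {x | t < dyadicMaximal μ F x} ≤ 3 ^ Module.finrank ℝ E * ∫⁻ y, F y ∂μ := by
  set level : ℕ → Set E := fun J => {x | ∃ j : ℤ, j ≤ J ∧ t < ⨍⁻ y in Metric.ball x (2 ^ j), F y ∂μ}
  have hmono : Monotone level := fun J K hJK x ⟨j, hj, h⟩ =>
    ⟨j, hj.trans (by exact_mod_cast hJK), h⟩
  have hunion : {x | t < dyadicMaximal μ F x} = ⋃ J, level J := by
    ext x
    simp only [Set.mem_ofPred_eq, dyadicMaximal, lt_iSup_iff, Set.mem_iUnion, level]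
    exact ⟨fun ⟨j, hj⟩ => ⟨j.toNat, j, Int.self_le_toNat j, hj⟩, fun ⟨_, j, _, hj⟩ => ⟨j, hj⟩⟩
  rw [hunion, hmono.measure_iUnion, ENNReal.mul_iSup]
  refine iSup_le fun J => ?_
  choose! j hj using fun x (hx : x ∈ level J) => hx
  exact mul_measure_le_of_forall_lt_setLAverage_ball μ F t (r := fun x => 2 ^ j x)
    (fun x _ => zpow_pos two_pos _) (fun x hx => zpow_le_zpow_right₀ one_le_two (hj x hx).1)
    (fun x hx => (hj x hx).2)

lemma mul_measure_lt_dyadicMaximal_le_setLIntegral {F : E → ℝ≥0∞} (hF : Measurable F)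
    (t : ℝ≥0∞) :
    t * μ {x | t < dyadicMaximal μ F x} ≤
      2 * 3 ^ Module.finrank ℝ E * ∫⁻ x in {x | t < 2 * F x}, F x ∂μ := by
  have hlevel : MeasurableSet {x | t < 2 * F x} :=
    measurableSet_lt measurable_const (hF.const_mul 2)
  set G : E → ℝ≥0∞ := {x | t < 2 * F x}.indicator F
  have hFG : ∀ x, F x ≤ G x + t / 2 := by
    intro x
    by_cases hx : t < 2 * F x
    · simp [G, hx]
    · rw [not_lt, mul_comm, ← ENNReal.le_div_iff_mul_le (by simp) (by simp)] at hx
      exact le_add_left hx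
  have hsub : {x | t < dyadicMaximal μ F x} ⊆ {x | t / 2 < dyadicMaximal μ G x} := by
    intro x hx
    have hle : dyadicMaximal μ F x ≤ dyadicMaximal μ G x + t / 2 :=
      (dyadicMaximal_mono μ hFG x).trans
        ((dyadicMaximal_add_le μ (hF.indicator hlevel) _ x).trans_eq
          (by rw [dyadicMaximal_const]))
    have hlt : t / 2 + t / 2 < dyadicMaximal μ G x + t / 2 := by
      rw [ENNReal.add_halves]
      exact lt_of_lt_of_le hx hle
    exact lt_of_add_lt_add_right hlt
  calc t * μ {x | t < dyadicMaximal μ F x} ≤ t * μ {x | t / 2 < dyadicMaximal μ G x} := by gcongr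
    _ = 2 * (t / 2 * μ {x | t / 2 < dyadicMaximal μ G x}) := by
        rw [← mul_assoc, ENNReal.mul_div_cancel (by simp) (by simp)]
    _ ≤ 2 * (3 ^ Module.finrank ℝ E * ∫⁻ x, G x ∂μ) := by
        exact mul_le_mul_right (mul_measure_lt_dyadicMaximal_le μ G _) _
    _ = 2 * 3 ^ Module.finrank ℝ E * ∫⁻ x in {x | t < 2 * F x}, F x ∂μ := by
        rw [lintegral_indicator hlevel, mul_assoc]

lemma exists_lintegral_dyadicMaximal_rpow_le {r : ℝ} (hr : 1 < r) :
    ∃ C : ℝ≥0∞, C ≠ ∞ ∧ ∀ F : E → ℝ≥0∞, Measurable F →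
      ∫⁻ x, dyadicMaximal μ F x ^ r ∂μ ≤ C * ∫⁻ x, F x ^ r ∂μ := by
  refine ⟨_, ?_, fun F hF => lintegral_rpow_le_of_mul_meas_lt_le hF
    (measurable_dyadicMaximal μ F) hr
    (mul_measure_lt_dyadicMaximal_le_setLIntegral μ hF)⟩
  have hpow : (2 : ℝ≥0∞) ^ (r - 1) ≠ ∞ := rpow_ne_top_of_nonneg (sub_nonneg.2 hr.le) ofNat_ne_top
  have hinv : (ENNReal.ofReal (r - 1))⁻¹ ≠ ∞ :=
    ENNReal.inv_ne_top.2 (ENNReal.ofReal_pos.2 (sub_pos.2 hr)).ne'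
  finiteness

end Maximal

section LogHolder

lemma rpow_le_exp_of_le_div_log {L θ c : ℝ} (hL : Real.exp 1 ≤ L) (h : θ ≤ c / Real.log L) :
    L ^ θ ≤ Real.exp c := by
  have hpos : 0 < L := (Real.exp_pos 1).trans_le hL
  have hlog : 0 < Real.log L := zero_lt_one.trans_le ((Real.le_log_iff_exp_le hpos).2 hL)
  rw [Real.rpow_def_of_pos hpos, Real.exp_le_exp, mul_comm]
  exact (le_div_iff₀ hlog).1 h

lemma lipschitzOnWith_inv_Ici {a : ℝ} (ha : 0 < a) :
    LipschitzOnWith (Real.toNNReal (a * a)⁻¹) (fun t : ℝ => t⁻¹) (Set.Ici a) := by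
  refine LipschitzOnWith.of_dist_le_mul fun s hs t ht => ?_
  have hs' : 0 < s := ha.trans_le hs
  have ht' : 0 < t := ha.trans_le ht
  rw [Real.coe_toNNReal _ (by positivity), dist_inv_inv₀ hs'.ne' ht'.ne',
    Real.norm_of_nonneg hs'.le, Real.norm_of_nonneg ht'.le, div_eq_inv_mul]
  gcongr
  exacts [hs, ht]

lemma conjExponent_eq_one_add_inv {t : ℝ} (ht : 1 < t) : Real.conjExponent t = 1 + (t - 1)⁻¹ := by
  have := sub_pos.2 ht
  rw [Real.conjExponent]
  field_simp
  ring

lemma lipschitzOnWith_conjExponent_Ici {a : ℝ} (ha : 1 < a) :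
    LipschitzOnWith (Real.toNNReal ((a - 1) * (a - 1))⁻¹) Real.conjExponent (Set.Ici a) := by
  refine LipschitzOnWith.of_dist_le_mul fun s hs t ht => ?_
  rw [conjExponent_eq_one_add_inv (ha.trans_le hs), conjExponent_eq_one_add_inv (ha.trans_le ht),
    dist_add_left, ← dist_sub_right s t 1]
  exact (lipschitzOnWith_inv_Ici (sub_pos.2 ha)).dist_le_mul _
    (Set.mem_Ici.2 (sub_le_sub_right hs 1)) _ (Set.mem_Ici.2 (sub_le_sub_right ht 1))

lemma log_exp_one_add_pos {t : ℝ} (ht : 0 ≤ t) : 0 < Real.log (Real.exp 1 + t) :=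
  Real.log_pos (by linarith [Real.add_one_lt_exp one_ne_zero])

lemma LocLogHolder.comp_lipschitzOnWith {g : Rn n → ℝ} (hg : LocLogHolder g) {φ : ℝ → ℝ}
    {s : Set ℝ} {K : NNReal} (hφ : LipschitzOnWith K φ s) (hs : ∀ x, g x ∈ s) :
    LocLogHolder fun x => φ (g x) := by
  obtain ⟨c, hc, h⟩ := hg
  refine ⟨(K + 1) * c, by positivity, fun x y => ?_⟩
  calc |φ (g x) - φ (g y)| ≤ K * |g x - g y| := hφ.dist_le_mul _ (hs x) _ (hs y)
    _ ≤ (K + 1) * |g x - g y| := by gcongr; linarith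
    _ ≤ (K + 1) * c / Real.log (Real.exp 1 + (dist x y)⁻¹) := by
        rw [mul_div_assoc]
        gcongr
        exact h x y

lemma LocLogHolder.continuous {g : Rn n → ℝ} (hg : LocLogHolder g) : Continuous g := by
  obtain ⟨c, -, h⟩ := hg
  refine continuous_iff_continuousAt.2 fun x => ?_
  rw [continuousAt_iff_punctured_nhds, tendsto_iff_dist_tendsto_zero]
  have hinv : Filter.Tendsto (fun y => (dist y x)⁻¹) (nhdsWithin x {x}ᶜ) Filter.atTop :=
    tendsto_inv_nhdsGT_zero.comp (tendsto_nhdsWithin_iff.2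
      ⟨(tendsto_iff_dist_tendsto_zero.1 Filter.tendsto_id).mono_left nhdsWithin_le_nhds,
        eventually_nhdsWithin_of_forall fun y hy => dist_pos.2 hy⟩)
  have hbound : Filter.Tendsto (fun y => c / Real.log (Real.exp 1 + (dist y x)⁻¹))
      (nhdsWithin x {x}ᶜ) (nhds 0) :=
    (tendsto_const_nhds (x := c)).div_atTop
      (Real.tendsto_log_atTop.comp (Filter.tendsto_atTop_add_const_left _ _ hinv))
  exact squeeze_zero (fun _ => dist_nonneg) (fun y => h y x) hbound

lemma LogDecay.max_of_le {g : Rn n → ℝ} {gInf c a : ℝ} (hg : LogDecay g gInf c)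
    (ha : ∀ x, a ≤ g x) : LogDecay g (max a gInf) c := fun x => by
  refine le_trans ?_ (hg x)
  simpa only [max_eq_left (ha x), max_comm] using abs_max_sub_max_le_abs (g x) gInf a

lemma LogDecay.comp_lipschitzOnWith {g : Rn n → ℝ} {gInf c : ℝ} (hg : LogDecay g gInf c)
    {φ : ℝ → ℝ} {s : Set ℝ} {K : NNReal} (hφ : LipschitzOnWith K φ s) (hs : ∀ x, g x ∈ s)
    (hInf : gInf ∈ s) : LogDecay (fun x => φ (g x)) (φ gInf) (K * c) := fun x =>
  calc |φ (g x) - φ gInf| ≤ K * |g x - gInf| := hφ.dist_le_mul _ (hs x) _ hInf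
    _ ≤ K * c / Real.log (Real.exp 1 + ‖x‖) := by
        rw [mul_div_assoc]
        gcongr
        exact hg x

/-- A finite-valued globally log-Hölder continuous exponent bounded away from `1` and `∞`. The
condition is imposed on `P` rather than on `1 / P`, which is equivalent under these bounds. -/
structure IsLogHolderExponent (P : Rn n → ℝ) : Prop where
  exists_one_lt_le : ∃ a, 1 < a ∧ ∀ x, a ≤ P x
  exists_le : ∃ b, ∀ x, P x ≤ b
  locLogHolder : LocLogHolder P
  exists_logDecay : ∃ Pinf c, LogDecay P Pinf c

lemma IsLogHolderExponent.one_lt {P : Rn n → ℝ} (hP : IsLogHolderExponent P) (x : Rn n) :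
    1 < P x := by
  obtain ⟨a, ha, haP⟩ := hP.exists_one_lt_le
  exact ha.trans_le (haP x)

lemma IsLogHolderExponent.measurable {P : Rn n → ℝ} (hP : IsLogHolderExponent P) : Measurable P :=
  hP.locLogHolder.continuous.measurable

lemma IsLogHolderExponent.conjExponent {P : Rn n → ℝ} (hP : IsLogHolderExponent P) :
    IsLogHolderExponent fun x => Real.conjExponent (P x) := by
  obtain ⟨a, ha, haP⟩ := hP.exists_one_lt_le
  obtain ⟨b, hb⟩ := hP.exists_le
  obtain ⟨Pinf, c, hdecay⟩ := hP.exists_logDecay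
  have hab : 1 < b := (hP.one_lt 0).trans_le (hb 0)
  refine ⟨⟨1 + (b - 1)⁻¹, by simpa using hab, fun x => ?_⟩, ⟨1 + (a - 1)⁻¹, fun x => ?_⟩,
    hP.locLogHolder.comp_lipschitzOnWith (lipschitzOnWith_conjExponent_Ici ha) haP,
    Real.conjExponent (max a Pinf), _, (hdecay.max_of_le haP).comp_lipschitzOnWith
      (lipschitzOnWith_conjExponent_Ici ha) haP (Set.mem_Ici.2 (le_max_left a Pinf))⟩
  · have := sub_pos.2 (hP.one_lt x)
    rw [conjExponent_eq_one_add_inv (hP.one_lt x)]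
    gcongr
    exact hb x
  · have := sub_pos.2 ha
    rw [conjExponent_eq_one_add_inv (hP.one_lt x)]
    gcongr
    exact haP x

end LogHolder

section VariableExponentMaximal

lemma LocLogHolder.exists_abs_sub_le_of_dist_le {g : Rn n → ℝ} (hg : LocLogHolder g) :
    ∃ c > 0, ∀ {x y : Rn n} {r : ℝ}, dist x y ≤ r →
      |g x - g y| ≤ c / Real.log (Real.exp 1 + r⁻¹) := by
  obtain ⟨c, hc, h⟩ := hg
  refine ⟨c, hc, fun {x y r} hr => ?_⟩
  have hlog : 0 < Real.log (Real.exp 1 + r⁻¹) :=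
    log_exp_one_add_pos (inv_nonneg.2 (dist_nonneg.trans hr))
  rcases eq_or_ne x y with rfl | hxy
  · rw [sub_self, abs_zero]
    positivity
  · refine (h x y).trans ?_
    have := dist_pos.2 hxy
    have := this.trans_le hr
    gcongr

lemma rpow_lintegral_le_lintegral_rpow {α : Type*} [MeasurableSpace α] {μ : Measure α}
    [IsProbabilityMeasure μ] {f : α → ℝ≥0∞} (hf : AEMeasurable f μ) {s : ℝ} (hs : 1 ≤ s) :
    (∫⁻ x, f x ∂μ) ^ s ≤ ∫⁻ x, f x ^ s ∂μ := by
  have h := eLpNorm'_le_eLpNorm'_of_exponent_le one_pos hs μ hf.aestronglyMeasurable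
  simp only [eLpNorm', enorm_eq_self, ENNReal.rpow_one, one_div, inv_one] at h
  exact (ENNReal.le_rpow_inv_iff (zero_lt_one.trans_le hs)).1 h

lemma rpow_setLAverage_le_setLAverage_rpow {α : Type*} [MeasurableSpace α] {μ : Measure α}
    {u : Set α} (h0 : μ u ≠ 0) (htop : μ u ≠ ∞) {f : α → ℝ≥0∞} (hf : Measurable f) {s : ℝ}
    (hs : 1 ≤ s) : (⨍⁻ x in u, f x ∂μ) ^ s ≤ ⨍⁻ x in u, f x ^ s ∂μ := by
  have : Fact (μ u < ∞) := ⟨htop.lt_top⟩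
  have : NeZero (μ.restrict u) := ⟨mt Measure.restrict_eq_zero.1 h0⟩
  exact rpow_lintegral_le_lintegral_rpow hf.aemeasurable hs

lemma rpow_le_rpow_of_eq_zero_or_one_le {x : ℝ≥0∞} (hx : x = 0 ∨ 1 ≤ x) {s s' : ℝ} (hs : 0 < s)
    (hss' : s ≤ s') : x ^ s ≤ x ^ s' := by
  rcases hx with rfl | hx
  · simp only [ENNReal.zero_rpow_of_pos hs, zero_le]
  · exact ENNReal.rpow_le_rpow_of_exponent_le hx hss'

lemma setLAverage_ball_le_of_lintegral_le_one {F : Rn n → ℝ≥0∞} (hF : ∫⁻ y, F y ≤ 1) (x : Rn n)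
    {r : ℝ} (hr : 0 < r) :
    ⨍⁻ y in Metric.ball x r, F y ∂volume ≤
      (volume (Metric.ball (0 : Rn n) 1))⁻¹ * ENNReal.ofReal (Real.exp 1 + r⁻¹) ^ n := by
  have hvol : volume (Metric.ball x r) =
      ENNReal.ofReal r ^ n * volume (Metric.ball (0 : Rn n) 1) := by
    rw [Measure.addHaar_ball_of_pos _ _ hr, finrank_euclideanSpace_fin, ENNReal.ofReal_pow hr.le]
  calc ⨍⁻ y in Metric.ball x r, F y ∂volume ≤ 1 / volume (Metric.ball x r) := by
        rw [setLAverage_eq]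
        gcongr
        exact (setLIntegral_le_lintegral _ _).trans hF
    _ = (volume (Metric.ball (0 : Rn n) 1))⁻¹ * ENNReal.ofReal r⁻¹ ^ n := by
        rw [hvol, one_div, ENNReal.mul_inv (Or.inr measure_ball_lt_top.ne)
          (Or.inl (by finiteness)), ENNReal.inv_pow, ENNReal.ofReal_inv_of_pos hr, mul_comm]
    _ ≤ _ := by
        gcongr
        linarith [Real.exp_pos 1]

/-- Jensen's inequality applies to the smallest exponent `σ` on the ball, and the loss
`A ^ (S x - σ)` is bounded because `A ≲ r⁻ⁿ` while `S x - σ ≲ 1 / log (e + 1 / r)`. -/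
lemma LocLogHolder.exists_rpow_setLAverage_ball_le {S : Rn n → ℝ} (hS : LocLogHolder S)
    (hS1 : ∀ x, 1 ≤ S x) :
    ∃ C : ℝ≥0∞, C ≠ ∞ ∧ ∀ F : Rn n → ℝ≥0∞, Measurable F → ∫⁻ x, F x ≤ 1 →
      (∀ x, F x = 0 ∨ 1 ≤ F x) → ∀ x r, 0 < r →
        (⨍⁻ y in Metric.ball x r, F y ∂volume) ^ S x ≤
          C * ⨍⁻ y in Metric.ball x r, F y ^ S y ∂volume := by
  obtain ⟨c, hc, hosc⟩ := hS.exists_abs_sub_le_of_dist_le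
  set V : ℝ≥0∞ := (volume (Metric.ball (0 : Rn n) 1))⁻¹
  have hV : V ≠ ∞ := ENNReal.inv_ne_top.2 (Metric.measure_ball_pos volume _ one_pos).ne'
  refine ⟨max 1 V ^ c * ENNReal.ofReal (Real.exp c) ^ n,
    by have := ENNReal.rpow_ne_top_of_nonneg hc.le (max_ne_top one_ne_top hV); finiteness,
    fun F hF hF1 hF01 x r hr => ?_⟩
  set A := ⨍⁻ y in Metric.ball x r, F y ∂volume
  set L := Real.exp 1 + r⁻¹
  have hL : Real.exp 1 ≤ L := le_add_of_nonneg_right (by positivity)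
  have hlogL : 1 ≤ Real.log L := (Real.le_log_iff_exp_le (by positivity)).2 hL
  set σ := max 1 (S x - c / Real.log L)
  have hσx : σ ≤ S x := max_le (hS1 x) (sub_le_self _ (by positivity))
  have hσ : ∀ y ∈ Metric.ball x r, σ ≤ S y := fun y hy =>
    max_le (hS1 y) (sub_le_comm.1 ((le_abs_self _).trans (hosc (Metric.mem_ball'.1 hy).le)))
  have hθ : S x - σ ≤ c / Real.log L := sub_le_comm.1 (le_max_right _ _)
  have hJensen : A ^ σ ≤ ⨍⁻ y in Metric.ball x r, F y ^ S y ∂volume := by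
    refine (rpow_setLAverage_le_setLAverage_rpow (Metric.measure_ball_pos volume x hr).ne'
      measure_ball_lt_top.ne hF (le_max_left _ _)).trans ?_
    simp only [setLAverage_eq]
    gcongr ?_ / _
    exact setLIntegral_mono' measurableSet_ball fun y hy =>
      rpow_le_rpow_of_eq_zero_or_one_le (hF01 y) (lt_max_of_lt_left one_pos) (hσ y hy)
  have hloss : A ^ (S x - σ) ≤ max 1 V ^ c * ENNReal.ofReal (Real.exp c) ^ n := by
    have hθ0 := sub_nonneg.2 hσx
    calc A ^ (S x - σ) ≤ (max 1 V * ENNReal.ofReal L ^ n) ^ (S x - σ) := by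
          gcongr
          exact (setLAverage_ball_le_of_lintegral_le_one hF1 x hr).trans
            (mul_le_mul_left (le_max_right 1 V) _)
      _ = max 1 V ^ (S x - σ) * ENNReal.ofReal (L ^ (S x - σ)) ^ n := by
          rw [ENNReal.mul_rpow_of_nonneg _ _ hθ0, ← ENNReal.rpow_natCast, ← ENNReal.rpow_mul,
            mul_comm (n : ℝ), ENNReal.rpow_mul, ENNReal.rpow_natCast,
            ENNReal.ofReal_rpow_of_nonneg (by positivity) hθ0]
      _ ≤ _ := by
          gcongr
          · exact le_max_left _ _
          · exact hθ.trans (div_le_self hc.le hlogL)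
          · exact rpow_le_exp_of_le_div_log hL hθ
  calc A ^ S x = A ^ (S x - σ) * A ^ σ := by
        rw [← ENNReal.rpow_add_of_nonneg _ _ (sub_nonneg.2 hσx)
          (zero_le_one.trans (le_max_left _ _)), sub_add_cancel]
    _ ≤ _ := mul_le_mul' hloss hJensen

lemma LocLogHolder.exists_rpow_dyadicMaximal_le {S : Rn n → ℝ} (hS : LocLogHolder S)
    (hS1 : ∀ x, 1 ≤ S x) :
    ∃ C : ℝ≥0∞, C ≠ ∞ ∧ ∀ F : Rn n → ℝ≥0∞, Measurable F → ∫⁻ x, F x ≤ 1 →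
      (∀ x, F x = 0 ∨ 1 ≤ F x) → ∀ x,
        dyadicMaximal volume F x ^ S x ≤ C * dyadicMaximal volume (fun y => F y ^ S y) x := by
  obtain ⟨C, hC, h⟩ := hS.exists_rpow_setLAverage_ball_le hS1
  refine ⟨C, hC, fun F hF hF1 hF01 x => ?_⟩
  have hSx : 0 < S x := zero_lt_one.trans_le (hS1 x)
  rw [← ENNReal.le_rpow_inv_iff hSx]
  refine iSup_le fun j => ?_
  rw [ENNReal.le_rpow_inv_iff hSx]
  exact (h F hF hF1 hF01 x _ (zpow_pos two_pos j)).trans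
    (mul_le_mul_right (setLAverage_ball_zpow_le_dyadicMaximal volume _ x j) _)

lemma IsLogHolderExponent.exists_lintegral_dyadicMaximal_rpow_le_of_large {P : Rn n → ℝ}
    (hP : IsLogHolderExponent P) :
    ∃ C : ℝ≥0∞, C ≠ ∞ ∧ ∀ F : Rn n → ℝ≥0∞, Measurable F → ∫⁻ x, F x ^ P x ≤ 1 →
      (∀ x, F x = 0 ∨ 1 ≤ F x) → ∫⁻ x, dyadicMaximal volume F x ^ P x ≤ C := by
  obtain ⟨a, ha, haP⟩ := hP.exists_one_lt_le
  have ha0 : 0 < a := zero_lt_one.trans ha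
  have hS : LocLogHolder fun x => P x / a := by
    obtain ⟨c, hc, h⟩ := hP.locLogHolder
    refine ⟨c, hc, fun x y => ?_⟩
    rw [← sub_div, abs_div, abs_of_pos ha0]
    exact (div_le_self (abs_nonneg _) ha.le).trans (h x y)
  obtain ⟨C₁, hC₁, hpointwise⟩ :=
    hS.exists_rpow_dyadicMaximal_le fun x => (one_le_div ha0).2 (haP x)
  obtain ⟨C₂, hC₂, hstrong⟩ := exists_lintegral_dyadicMaximal_rpow_le (volume : Measure (Rn n)) ha
  refine ⟨C₁ ^ a * C₂, ENNReal.mul_ne_top (ENNReal.rpow_ne_top_of_nonneg ha0.le hC₁) hC₂,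
    fun F hF hF1 hF01 => ?_⟩
  have hpow : ∀ t : ℝ≥0∞, ∀ x, (t ^ (P x / a)) ^ a = t ^ P x := fun t x => by
    rw [← ENNReal.rpow_mul, div_mul_cancel₀ _ ha0.ne']
  have hint : ∫⁻ x, F x ≤ 1 := by
    refine (lintegral_mono fun x => ?_).trans hF1
    simpa only [ENNReal.rpow_one] using
      rpow_le_rpow_of_eq_zero_or_one_le (hF01 x) one_pos (hP.one_lt x).le
  calc ∫⁻ x, dyadicMaximal volume F x ^ P x
      ≤ ∫⁻ x, C₁ ^ a * dyadicMaximal volume (fun y => F y ^ (P y / a)) x ^ a := by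
        refine lintegral_mono fun x => ?_
        rw [← hpow, ← ENNReal.mul_rpow_of_nonneg _ _ ha0.le]
        exact ENNReal.rpow_le_rpow (hpointwise F hF hint hF01 x) ha0.le
    _ = C₁ ^ a * ∫⁻ x, dyadicMaximal volume (fun y => F y ^ (P y / a)) x ^ a :=
        lintegral_const_mul _ ((measurable_dyadicMaximal _ _).pow_const a)
    _ ≤ C₁ ^ a * (C₂ * ∫⁻ x, (F x ^ (P x / a)) ^ a) := by
        gcongr
        exact hstrong _ (hF.pow (hP.measurable.div_const a))
    _ = C₁ ^ a * C₂ * ∫⁻ x, F x ^ P x := by simp only [hpow, mul_assoc]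
    _ ≤ C₁ ^ a * C₂ := mul_le_of_le_one_right' hF1

lemma rpow_le_mul_rpow_add {t l κ : ℝ≥0∞} {s s' : ℝ} (ht : t ≤ 1) (hs : 1 ≤ s)
    (hl : l ^ (-|s - s'|) ≤ κ) : t ^ s ≤ κ * t ^ s' + l := by
  rcases le_or_gt t l with htl | hlt
  · refine le_add_left (le_trans ?_ htl)
    simpa only [ENNReal.rpow_one] using ENNReal.rpow_le_rpow_of_exponent_ge ht hs
  · have ht0 : t ≠ 0 := (zero_le.trans_lt hlt).ne'
    refine le_add_right ?_
    calc t ^ s = t ^ (s - s') * t ^ s' := by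
          rw [← ENNReal.rpow_add _ _ ht0 (ne_top_of_le_ne_top one_ne_top ht), sub_add_cancel]
      _ ≤ l ^ (-|s - s'|) * t ^ s' := by
          gcongr
          refine (ENNReal.rpow_le_rpow_of_exponent_ge ht (neg_abs_le _)).trans ?_
          rw [ENNReal.rpow_neg, ENNReal.rpow_neg]
          gcongr
      _ ≤ κ * t ^ s' := by gcongr

lemma lintegral_exp_one_add_norm_rpow_ne_top :
    ∫⁻ x : Rn n, ENNReal.ofReal ((Real.exp 1 + ‖x‖) ^ (-((n : ℝ) + 1))) ≠ ∞ := by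
  refine ne_top_of_le_ne_top (finite_integral_one_add_norm (E := Rn n) (μ := volume)
    (r := (n : ℝ) + 1) (by simp)).ne (lintegral_mono fun x => ?_)
  refine ENNReal.ofReal_le_ofReal (Real.rpow_le_rpow_of_nonpos (by positivity) ?_ (by linarith))
  gcongr
  exact Real.one_le_exp zero_le_one

lemma LogDecay.exists_rpow_le_mul_rpow_add {P : Rn n → ℝ} {Pinf c : ℝ} (hP : LogDecay P Pinf c)
    (hP1 : ∀ x, 1 ≤ P x) (hPinf : 1 ≤ Pinf) :
    ∃ (κ : ℝ≥0∞) (w : Rn n → ℝ≥0∞), κ ≠ ∞ ∧ Measurable w ∧ ∫⁻ x, w x ≠ ∞ ∧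
      ∀ x t, t ≤ 1 → t ^ P x ≤ κ * t ^ Pinf + w x ∧ t ^ Pinf ≤ κ * t ^ P x + w x := by
  refine ⟨ENNReal.ofReal (Real.exp c ^ ((n : ℝ) + 1)),
    fun x => ENNReal.ofReal ((Real.exp 1 + ‖x‖) ^ (-((n : ℝ) + 1))), ofReal_ne_top, by fun_prop,
    lintegral_exp_one_add_norm_rpow_ne_top, fun x t ht => ?_⟩
  have hL : 0 < Real.exp 1 + ‖x‖ := by positivity
  have hw : ENNReal.ofReal ((Real.exp 1 + ‖x‖) ^ (-((n : ℝ) + 1))) ^ (-|P x - Pinf|) ≤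
      ENNReal.ofReal (Real.exp c ^ ((n : ℝ) + 1)) := by
    rw [ENNReal.ofReal_rpow_of_pos (by positivity), ← Real.rpow_mul hL.le, neg_mul_neg, mul_comm,
      Real.rpow_mul hL.le]
    gcongr
    exact rpow_le_exp_of_le_div_log (by simp) (hP x)
  exact ⟨rpow_le_mul_rpow_add ht (hP1 x) hw,
    rpow_le_mul_rpow_add ht hPinf (by rwa [abs_sub_comm])⟩

lemma IsLogHolderExponent.exists_lintegral_dyadicMaximal_rpow_le_of_le_one {P : Rn n → ℝ}
    (hP : IsLogHolderExponent P) :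
    ∃ C : ℝ≥0∞, C ≠ ∞ ∧ ∀ F : Rn n → ℝ≥0∞, Measurable F → ∫⁻ x, F x ^ P x ≤ 1 →
      (∀ x, F x ≤ 1) → ∫⁻ x, dyadicMaximal volume F x ^ P x ≤ C := by
  obtain ⟨a, ha, haP⟩ := hP.exists_one_lt_le
  obtain ⟨Pinf, c, hdecay⟩ := hP.exists_logDecay
  have hr : 1 < max a Pinf := lt_max_of_lt_left ha
  obtain ⟨κ, w, hκ, hw, hwint, hcompare⟩ :=
    (hdecay.max_of_le haP).exists_rpow_le_mul_rpow_add (fun x => (hP.one_lt x).le) hr.le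
  obtain ⟨C, hC, hstrong⟩ := exists_lintegral_dyadicMaximal_rpow_le (volume : Measure (Rn n)) hr
  refine ⟨κ * (C * (κ + ∫⁻ x, w x)) + ∫⁻ x, w x, by finiteness, fun F hF hF1 hFle => ?_⟩
  have hMle : ∀ x, dyadicMaximal volume F x ≤ 1 := fun x =>
    (dyadicMaximal_mono volume hFle x).trans_eq (dyadicMaximal_const volume 1 x)
  calc ∫⁻ x, dyadicMaximal volume F x ^ P x
      ≤ ∫⁻ x, (κ * dyadicMaximal volume F x ^ max a Pinf + w x) :=
        lintegral_mono fun x => (hcompare x _ (hMle x)).1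
    _ = κ * (∫⁻ x, dyadicMaximal volume F x ^ max a Pinf) + ∫⁻ x, w x := by
        rw [lintegral_add_right _ hw, lintegral_const_mul' _ _ hκ]
    _ ≤ κ * (C * ∫⁻ x, (κ * F x ^ P x + w x)) + ∫⁻ x, w x := by
        gcongr
        exact (hstrong F hF).trans
          (mul_le_mul_right (lintegral_mono fun x => (hcompare x _ (hFle x)).2) _)
    _ = κ * (C * (κ * (∫⁻ x, F x ^ P x) + ∫⁻ x, w x)) + ∫⁻ x, w x := by
        rw [lintegral_add_right _ hw, lintegral_const_mul' _ _ hκ]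
    _ ≤ _ := by
        gcongr
        exact mul_le_of_le_one_right' hF1

lemma add_rpow_le_two_rpow_mul {s b : ℝ} (hs : 0 ≤ s) (hsb : s ≤ b) (x y : ℝ≥0∞) :
    (x + y) ^ s ≤ 2 ^ b * (x ^ s + y ^ s) := by
  calc (x + y) ^ s ≤ (2 * max x y) ^ s := by
        gcongr
        rw [two_mul]
        exact add_le_add (le_max_left x y) (le_max_right x y)
    _ = 2 ^ s * max (x ^ s) (y ^ s) := by
        rw [ENNReal.mul_rpow_of_nonneg _ _ hs, (ENNReal.monotone_rpow_of_nonneg hs).map_max]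
    _ ≤ 2 ^ b * (x ^ s + y ^ s) := by
        gcongr
        · exact one_le_two
        · exact max_le_add_of_nonneg zero_le zero_le

theorem IsLogHolderExponent.exists_lintegral_dyadicMaximal_rpow_le {P : Rn n → ℝ}
    (hP : IsLogHolderExponent P) :
    ∃ C : ℝ≥0∞, C ≠ ∞ ∧ ∀ F : Rn n → ℝ≥0∞, Measurable F → ∫⁻ x, F x ^ P x ≤ 1 →
      ∫⁻ x, dyadicMaximal volume F x ^ P x ≤ C := by
  obtain ⟨C₁, hC₁, hlarge⟩ := hP.exists_lintegral_dyadicMaximal_rpow_le_of_large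
  obtain ⟨C₂, hC₂, hsmall⟩ := hP.exists_lintegral_dyadicMaximal_rpow_le_of_le_one
  obtain ⟨b, hb⟩ := hP.exists_le
  have hP0 : ∀ x, 0 ≤ P x := fun x => zero_le_one.trans (hP.one_lt x).le
  have h2 : (2 : ℝ≥0∞) ^ b ≠ ∞ :=
    ENNReal.rpow_ne_top_of_nonneg ((hP0 0).trans (hb 0)) ofNat_ne_top
  refine ⟨2 ^ b * (C₁ + C₂), by finiteness, fun F hF hF1 => ?_⟩
  set s : Set (Rn n) := {x | 1 < F x}
  have hs : MeasurableSet s := measurableSet_lt measurable_const hF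
  have hindicator : ∀ u : Set (Rn n), ∫⁻ x, u.indicator F x ^ P x ≤ 1 := fun u =>
    (lintegral_mono fun x => ENNReal.rpow_le_rpow (Set.indicator_le_self u F x) (hP0 x)).trans hF1
  have hsplit : ∀ x, dyadicMaximal volume F x ≤
      dyadicMaximal volume (s.indicator F) x + dyadicMaximal volume (sᶜ.indicator F) x := fun x =>
    (dyadicMaximal_mono volume (fun y => (Set.indicator_self_add_compl_apply s F y).ge) x).trans
      (dyadicMaximal_add_le volume (hF.indicator hs) _ x)
  calc ∫⁻ x, dyadicMaximal volume F x ^ P x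
      ≤ ∫⁻ x, 2 ^ b * (dyadicMaximal volume (s.indicator F) x ^ P x +
          dyadicMaximal volume (sᶜ.indicator F) x ^ P x) :=
        lintegral_mono fun x => (ENNReal.rpow_le_rpow (hsplit x) (hP0 x)).trans
          (add_rpow_le_two_rpow_mul (hP0 x) (hb x) _ _)
    _ = 2 ^ b * ((∫⁻ x, dyadicMaximal volume (s.indicator F) x ^ P x) +
          ∫⁻ x, dyadicMaximal volume (sᶜ.indicator F) x ^ P x) := by
        rw [lintegral_const_mul' _ _ h2,
          lintegral_add_left ((measurable_dyadicMaximal _ _).pow hP.measurable)]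
    _ ≤ 2 ^ b * (C₁ + C₂) := by
        gcongr
        · refine hlarge _ (hF.indicator hs) (hindicator s) fun x => ?_
          by_cases hx : x ∈ s
          · exact Or.inr (by simpa only [Set.indicator_of_mem hx] using le_of_lt hx)
          · exact Or.inl (Set.indicator_of_notMem hx F)
        · refine hsmall _ (hF.indicator hs.compl) (hindicator sᶜ) fun x => ?_
          exact Set.indicator_le' (fun y hy => not_lt.1 hy) (fun _ _ => zero_le_one) x

end VariableExponentMaximal

section Kernel

lemma etaK_neg (ν : ℕ) (m : ℝ) (x : Rn n) : etaK ν m (-x) = etaK ν m x := by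
  rw [etaK, etaK, norm_neg]

lemma measurable_etaK (ν : ℕ) (m : ℝ) : Measurable (etaK ν m : Rn n → ℝ≥0∞) := by
  unfold etaK
  fun_prop

lemma etaK_mul_ofReal_rpow (ν : ℕ) (m s : ℝ) (x : Rn n) :
    etaK ν m x * ENNReal.ofReal ((1 + 2 ^ ν * ‖x‖) ^ s) = etaK ν (m - s) x := by
  rw [etaK, etaK, ← ENNReal.ofReal_mul (by positivity), mul_assoc,
    ← Real.rpow_add (by positivity), neg_sub, neg_add_eq_sub]

lemma etaK_anti (ν : ℕ) {m m' : ℝ} (h : m' ≤ m) (x : Rn n) : etaK ν m x ≤ etaK ν m' x := by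
  unfold etaK
  gcongr
  exact le_add_of_nonneg_right (by positivity)

lemma lconv_mono (g : Rn n → ℝ≥0∞) {f₁ f₂ : Rn n → ℝ≥0∞} (h : ∀ x, f₁ x ≤ f₂ x) (x : Rn n) :
    lconv g f₁ x ≤ lconv g f₂ x :=
  lintegral_mono fun y => mul_le_mul_right (h y) _

lemma measurable_lconv {f g : Rn n → ℝ≥0∞} (hf : Measurable f) (hg : Measurable g) :
    Measurable (lconv f g) :=
  Measurable.lintegral_prod_right' (f := fun z : Rn n × Rn n => f (z.1 - z.2) * g z.2) (by fun_prop)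

lemma lintegral_mul_lconv_comm {g : Rn n → ℝ≥0∞} (hg : Measurable g) (heven : ∀ x, g (-x) = g x)
    {f₁ f₂ : Rn n → ℝ≥0∞} (hf₁ : Measurable f₁) (hf₂ : Measurable f₂) :
    ∫⁻ x, f₁ x * lconv g f₂ x = ∫⁻ x, f₂ x * lconv g f₁ x := by
  calc ∫⁻ x, f₁ x * lconv g f₂ x = ∫⁻ x, ∫⁻ y, f₁ x * (g (x - y) * f₂ y) :=
        lintegral_congr fun x => (lintegral_const_mul _ (by fun_prop)).symm
    _ = ∫⁻ y, ∫⁻ x, f₁ x * (g (x - y) * f₂ y) := lintegral_lintegral_swap (by fun_prop)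
    _ = ∫⁻ y, f₂ y * lconv g f₁ y := by
        refine lintegral_congr fun y => ?_
        rw [lconv, ← lintegral_const_mul _ (by fun_prop)]
        refine lintegral_congr fun x => ?_
        rw [← heven, neg_sub]
        ring

lemma exists_lt_two_pow_and_one_add_rpow_neg_le {t m : ℝ} (ht : 0 ≤ t) (hm : 0 ≤ m) :
    ∃ i : ℕ, t < 2 ^ i ∧ (1 + t) ^ (-m) ≤ 2 ^ m * ((2 : ℝ) ^ (-m)) ^ i := by
  have hm2 : (2 : ℝ) ^ m * 2 ^ (-m) = 1 := by
    rw [← Real.rpow_add two_pos, add_neg_cancel, Real.rpow_zero]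
  rcases lt_or_ge t 1 with h1 | h1
  · refine ⟨0, by simpa using h1, ?_⟩
    rw [pow_zero, mul_one]
    exact (Real.rpow_le_one_of_one_le_of_nonpos (by linarith) (by linarith)).trans
      (Real.one_le_rpow one_le_two hm)
  · obtain ⟨i, hi, hi'⟩ := exists_nat_pow_near h1 one_lt_two
    refine ⟨i + 1, hi', ?_⟩
    calc (1 + t) ^ (-m) ≤ ((2 : ℝ) ^ i) ^ (-m) :=
          Real.rpow_le_rpow_of_nonpos (by positivity) (by linarith) (by linarith)
      _ = ((2 : ℝ) ^ (-m)) ^ i := by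
          rw [← Real.rpow_natCast, ← Real.rpow_natCast, ← Real.rpow_mul two_pos.le,
            ← Real.rpow_mul two_pos.le, mul_comm]
      _ = 2 ^ m * ((2 : ℝ) ^ (-m)) ^ (i + 1) := by rw [pow_succ', ← mul_assoc, hm2, one_mul]

lemma etaK_le_tsum_indicator_ball (ν : ℕ) {m : ℝ} (hm : 0 ≤ m) (x y : Rn n) :
    etaK ν m (x - y) ≤ ∑' i : ℕ, (Metric.ball x (2 ^ ((i : ℤ) - ν))).indicator
      (fun _ => ENNReal.ofReal (2 ^ m * 2 ^ (ν * n) * ((2 : ℝ) ^ (-m)) ^ i)) y := by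
  obtain ⟨i, hi, hle⟩ :=
    exists_lt_two_pow_and_one_add_rpow_neg_le (t := 2 ^ ν * ‖x - y‖) (by positivity) hm
  refine le_trans ?_ (ENNReal.le_tsum i)
  have hmem : y ∈ Metric.ball x (2 ^ ((i : ℤ) - ν)) := by
    rwa [Metric.mem_ball', dist_eq_norm, zpow_sub₀ two_ne_zero, zpow_natCast, zpow_natCast,
      lt_div_iff₀' (by positivity)]
  rw [Set.indicator_of_mem hmem, etaK, mul_comm ((2 : ℝ) ^ m), mul_assoc]
  gcongr

lemma ofReal_mul_volume_ball_two_zpow (m : ℝ) (ν i : ℕ) (x : Rn n) :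
    ENNReal.ofReal (2 ^ m * 2 ^ (ν * n) * ((2 : ℝ) ^ (-m)) ^ i) *
        volume (Metric.ball x (2 ^ ((i : ℤ) - ν))) =
      ENNReal.ofReal (2 ^ m * ((2 : ℝ) ^ ((n : ℝ) - m)) ^ i) *
        volume (Metric.ball (0 : Rn n) 1) := by
  rw [Measure.addHaar_ball_of_pos _ _ (by positivity), finrank_euclideanSpace_fin, ← mul_assoc,
    ← ENNReal.ofReal_mul (by positivity)]
  congr 2
  rw [zpow_sub₀ two_ne_zero, zpow_natCast, zpow_natCast, sub_eq_add_neg, Real.rpow_add two_pos,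
    mul_pow, div_pow, ← pow_mul, ← pow_mul, Real.rpow_natCast, ← pow_mul, mul_comm n i]
  field_simp

lemma exists_lconv_etaK_le_mul_dyadicMaximal {m : ℝ} (hm : (n : ℝ) < m) :
    ∃ C : ℝ≥0∞, C ≠ ∞ ∧ ∀ (ν : ℕ) (F : Rn n → ℝ≥0∞), Measurable F → ∀ x,
      lconv (etaK ν m) F x ≤ C * dyadicMaximal volume F x := by
  set v : ℝ≥0∞ := volume (Metric.ball (0 : Rn n) 1)
  have hsum : Summable fun i : ℕ => (2 : ℝ) ^ m * ((2 : ℝ) ^ ((n : ℝ) - m)) ^ i :=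
    (summable_geometric_of_lt_one (by positivity)
      (Real.rpow_lt_one_of_one_lt_of_neg one_lt_two (sub_neg.2 hm))).mul_left _
  refine ⟨(∑' i : ℕ, ENNReal.ofReal (2 ^ m * ((2 : ℝ) ^ ((n : ℝ) - m)) ^ i)) * v,
    ENNReal.mul_ne_top hsum.tsum_ofReal_ne_top measure_ball_lt_top.ne, fun ν F hF x => ?_⟩
  set B : ℕ → Set (Rn n) := fun i => Metric.ball x (2 ^ ((i : ℤ) - ν))
  set A : ℕ → ℝ≥0∞ := fun i => ENNReal.ofReal (2 ^ m * 2 ^ (ν * n) * ((2 : ℝ) ^ (-m)) ^ i)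
  calc lconv (etaK ν m) F x ≤ ∫⁻ y, ∑' i, (B i).indicator (fun y => A i * F y) y := by
        refine lintegral_mono fun y => ?_
        refine (mul_le_mul_left (etaK_le_tsum_indicator_ball ν
          ((Nat.cast_nonneg n).trans hm.le) x y) (F y)).trans_eq ?_
        simp only [← ENNReal.tsum_mul_right, Set.indicator_mul_left, B, A]
    _ = ∑' i, A i * ∫⁻ y in B i, F y := by
        rw [lintegral_tsum fun i => ((hF.const_mul _).indicator measurableSet_ball).aemeasurable]
        refine tsum_congr fun i => ?_
        rw [lintegral_indicator measurableSet_ball, lintegral_const_mul _ hF]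
    _ = ∑' i, A i * volume (B i) * ⨍⁻ y in B i, F y ∂volume := by
        refine tsum_congr fun i => ?_
        rw [mul_assoc, measure_mul_setLAverage _ measure_ball_lt_top.ne]
    _ ≤ ∑' i, A i * volume (B i) * dyadicMaximal volume F x := by
        gcongr with i
        exact setLAverage_ball_zpow_le_dyadicMaximal volume F x _
    _ = _ := by simp only [A, B, ofReal_mul_volume_ball_two_zpow, ENNReal.tsum_mul_right, v]

lemma LocLogHolder.exists_rpow_abs_sub_le {Q : Rn n → ℝ} {b : ℝ} (hQ : LocLogHolder Q)
    (hb : ∀ x y, |Q x - Q y| ≤ b) :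
    ∃ C > 0, ∀ (T : ℝ) (x y : Rn n), 1 ≤ T →
      T ^ |Q x - Q y| ≤ C * (1 + T * ‖x - y‖) ^ (2 * b) := by
  obtain ⟨c, hc, hosc⟩ := hQ.exists_abs_sub_le_of_dist_le
  refine ⟨Real.exp c ^ 2, by positivity, fun T x y hT => ?_⟩
  have hT0 : 0 < T := zero_lt_one.trans_le hT
  have hb0 : 0 ≤ b := (abs_nonneg _).trans (hb 0 0)
  have hw : 1 ≤ 1 + T * ‖x - y‖ := le_add_of_nonneg_right (by positivity)
  rcases le_or_gt (Real.sqrt T * ‖x - y‖) 1 with hnear | hfar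
  · have hθ : |Q x - Q y| ≤ c / Real.log (Real.exp 1 + Real.sqrt T) := by
      have h := hosc (x := x) (y := y) (r := (Real.sqrt T)⁻¹) (by
        rwa [dist_eq_norm, ← one_div, le_div_iff₀' (Real.sqrt_pos.2 hT0)])
      rwa [inv_inv] at h
    calc T ^ |Q x - Q y| = (Real.sqrt T ^ |Q x - Q y|) ^ 2 := by
          rw [← Real.rpow_mul_natCast (Real.sqrt_nonneg T), mul_comm, Real.rpow_natCast_mul
            (Real.sqrt_nonneg T), Real.sq_sqrt hT0.le]
      _ ≤ ((Real.exp 1 + Real.sqrt T) ^ |Q x - Q y|) ^ 2 := by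
          gcongr
          exact le_add_of_nonneg_left (Real.exp_pos 1).le
      _ ≤ Real.exp c ^ 2 := by
          gcongr
          exact rpow_le_exp_of_le_div_log (le_add_of_nonneg_right (Real.sqrt_nonneg T)) hθ
      _ ≤ _ := le_mul_of_one_le_right (by positivity) (Real.one_le_rpow hw (by positivity))
  · have hTw : Real.sqrt T ≤ 1 + T * ‖x - y‖ := by
      calc Real.sqrt T ≤ Real.sqrt T * (Real.sqrt T * ‖x - y‖) :=
            le_mul_of_one_le_right (Real.sqrt_nonneg T) hfar.le
        _ = T * ‖x - y‖ := by rw [← mul_assoc, Real.mul_self_sqrt hT0.le]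
        _ ≤ _ := le_add_of_nonneg_left zero_le_one
    calc T ^ |Q x - Q y| ≤ ((1 + T * ‖x - y‖) ^ 2) ^ |Q x - Q y| := by
          gcongr
          exact (Real.sqrt_le_left (by positivity)).1 hTw
      _ = (1 + T * ‖x - y‖) ^ (2 * |Q x - Q y|) := by
          rw [← Real.rpow_natCast_mul (by positivity), Nat.cast_ofNat]
      _ ≤ (1 + T * ‖x - y‖) ^ (2 * b) := by
          gcongr
          exact hb x y
      _ ≤ _ := le_mul_of_one_le_left (by positivity) (one_le_pow₀ (Real.one_le_exp hc.le))

/-- Moving the base point of the exponent from `x` to `y` costs a small power of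
`1 + 2 ^ ν * ‖x - y‖`, which the kernel can afford, and an error decaying geometrically in `ν`. -/
lemma LocLogHolder.exists_rpow_le_mul_rpow_add {Q : Rn n → ℝ} {b δ : ℝ} (hQ : LocLogHolder Q)
    (hQ1 : ∀ x, 1 ≤ Q x) (hb : ∀ x y, |Q x - Q y| ≤ b) (hδ : 0 < δ) :
    ∃ E : ℝ≥0∞, E ≠ ∞ ∧ ∀ (ν : ℕ) (x y : Rn n) (t : ℝ≥0∞), t ≤ 1 →
      t ^ Q x ≤ E * ENNReal.ofReal ((1 + 2 ^ ν * ‖x - y‖) ^ (2 * b * δ)) * t ^ Q y +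
        ENNReal.ofReal (((2 : ℝ) ^ (-δ)) ^ ν) := by
  obtain ⟨C, hC, h⟩ := hQ.exists_rpow_abs_sub_le hb
  refine ⟨ENNReal.ofReal (C ^ δ), ofReal_ne_top, fun ν x y t ht =>
    rpow_le_mul_rpow_add ht (hQ1 x) ?_⟩
  have hpow : (((2 : ℝ) ^ (-δ)) ^ ν) ^ (-|Q x - Q y|) = (((2 : ℝ) ^ ν) ^ |Q x - Q y|) ^ δ := by
    simp only [← Real.rpow_natCast, ← Real.rpow_mul zero_le_two]
    ring_nf
  calc ENNReal.ofReal (((2 : ℝ) ^ (-δ)) ^ ν) ^ (-|Q x - Q y|)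
      = ENNReal.ofReal ((((2 : ℝ) ^ ν) ^ |Q x - Q y|) ^ δ) := by
        rw [ENNReal.ofReal_rpow_of_pos (by positivity), hpow]
    _ ≤ ENNReal.ofReal ((C * (1 + 2 ^ ν * ‖x - y‖) ^ (2 * b)) ^ δ) := by
        gcongr
        exact h _ x y (one_le_pow₀ one_le_two)
    _ = ENNReal.ofReal (C ^ δ) * ENNReal.ofReal ((1 + 2 ^ ν * ‖x - y‖) ^ (2 * b * δ)) := by
        rw [Real.mul_rpow hC.le (by positivity), ← Real.rpow_mul (by positivity),
          ENNReal.ofReal_mul (by positivity)]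

lemma mul_rpow_sub_one_le_add (x y : ℝ≥0∞) {s : ℝ} (hs : 1 ≤ s) :
    x * y ^ (s - 1) ≤ y ^ s + x ^ s := by
  rw [rpow_eq_mul_rpow_sub_one hs x, rpow_eq_mul_rpow_sub_one hs y]
  rcases le_total x y with h | h
  · exact le_add_right (mul_le_mul_left h _)
  · exact le_add_left (mul_le_mul_right (ENNReal.rpow_le_rpow h (sub_nonneg.2 hs)) _)

lemma LocLogHolder.exists_etaK_mul_le {Q : Rn n → ℝ} {b m m' : ℝ} (hQ : LocLogHolder Q)
    (hQ1 : ∀ x, 1 ≤ Q x) (hQb : ∀ x, Q x ≤ b) (hm : m' < m) :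
    ∃ (E : ℝ≥0∞) (ε : ℕ → ℝ≥0∞), E ≠ ∞ ∧ ∑' ν, ε ν ≠ ∞ ∧
      ∀ (ν : ℕ) (x y : Rn n) (a t : ℝ≥0∞), a ≤ 1 → etaK ν m (x - y) * (a * t ^ (Q x - 1)) ≤
        etaK ν m' (x - y) * (t ^ Q x + ε ν + E * a ^ Q y) := by
  have hb : 0 < b := zero_lt_one.trans_le ((hQ1 0).trans (hQb 0))
  have hosc : ∀ x y, |Q x - Q y| ≤ b := fun x y => by
    rw [abs_le]
    constructor <;> linarith [hQ1 x, hQ1 y, hQb x, hQb y]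
  set δ := (m - m') / (2 * b) with hδdef
  have hδ : 0 < δ := div_pos (sub_pos.2 hm) (by positivity)
  have hbδ : 2 * b * δ = m - m' := by
    rw [hδdef]
    field_simp
  obtain ⟨E, hE, h⟩ := hQ.exists_rpow_le_mul_rpow_add hQ1 hosc hδ
  refine ⟨E, fun ν => ENNReal.ofReal (((2 : ℝ) ^ (-δ)) ^ ν), hE, (summable_geometric_of_lt_one
    (by positivity) (Real.rpow_lt_one_of_one_lt_of_neg one_lt_two
      (neg_neg_of_pos hδ))).tsum_ofReal_ne_top, fun ν x y a t ha => ?_⟩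
  have hη : etaK ν m (x - y) * ENNReal.ofReal ((1 + 2 ^ ν * ‖x - y‖) ^ (2 * b * δ)) =
      etaK ν m' (x - y) := by
    rw [etaK_mul_ofReal_rpow, hbδ, sub_sub_self]
  set w := ENNReal.ofReal ((1 + 2 ^ ν * ‖x - y‖) ^ (2 * b * δ))
  set ε := ENNReal.ofReal (((2 : ℝ) ^ (-δ)) ^ ν)
  calc etaK ν m (x - y) * (a * t ^ (Q x - 1))
      ≤ etaK ν m (x - y) * (t ^ Q x + (E * w * a ^ Q y + ε)) := by
        gcongr
        exact (mul_rpow_sub_one_le_add a t (hQ1 x)).trans (add_le_add_right (h ν x y a ha) _)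
    _ = etaK ν m (x - y) * (t ^ Q x + ε) + etaK ν m (x - y) * w * (E * a ^ Q y) := by ring
    _ ≤ etaK ν m' (x - y) * (t ^ Q x + ε) + etaK ν m' (x - y) * (E * a ^ Q y) := by
        rw [hη]
        gcongr
        exact etaK_anti ν hm.le _
    _ = _ := (mul_add _ _ _).symm

lemma le_one_of_rpow_le_one {x : ℝ≥0∞} {s : ℝ} (hs : 0 < s) (h : x ^ s ≤ 1) : x ≤ 1 := by
  rwa [← ENNReal.one_rpow s, ENNReal.rpow_le_rpow_iff hs] at h

lemma LocLogHolder.exists_lconv_etaK_mul_rpow_le {Q : Rn n → ℝ} {b m m' : ℝ} (hQ : LocLogHolder Q)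
    (hQ1 : ∀ x, 1 ≤ Q x) (hQb : ∀ x, Q x ≤ b) (hm : m' < m) :
    ∃ (E : ℝ≥0∞) (ε : ℕ → ℝ≥0∞), E ≠ ∞ ∧ ∑' ν, ε ν ≠ ∞ ∧
      ∀ (ν : ℕ) (F a : Rn n → ℝ≥0∞), Measurable F → Measurable a → (∀ y, a y ≤ 1) →
        ∀ x t, lconv (etaK ν m) (fun y => F y * a y) x * t ^ (Q x - 1) ≤
          (t ^ Q x + ε ν) * lconv (etaK ν m') F x +
            E * lconv (etaK ν m') (fun y => F y * a y ^ Q y) x := by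
  obtain ⟨E, ε, hE, hε, h⟩ := hQ.exists_etaK_mul_le hQ1 hQb hm
  refine ⟨E, ε, hE, hε, fun ν F a hF ha ha1 x t => ?_⟩
  have hη : ∀ r : ℝ, Measurable (etaK ν r : Rn n → ℝ≥0∞) := measurable_etaK ν
  have hQm := hQ.continuous.measurable
  simp only [lconv]
  rw [← lintegral_mul_const _ (by fun_prop), ← lintegral_const_mul _ (by fun_prop),
    ← lintegral_const_mul _ (by fun_prop), ← lintegral_add_left (by fun_prop)]
  refine lintegral_mono fun y => ?_
  calc etaK ν m (x - y) * (F y * a y) * t ^ (Q x - 1)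
      = etaK ν m (x - y) * (a y * t ^ (Q x - 1)) * F y := by ring
    _ ≤ etaK ν m' (x - y) * (t ^ Q x + ε ν + E * a y ^ Q y) * F y :=
        mul_le_mul_left (h ν x y _ t (ha1 y)) _
    _ = _ := by ring

end Kernel

section SeqNorm

variable {ι : Type*}

/-- The `ℓ^s` norm of a `[0,∞]`-valued family for a finite real exponent `s`, used to state facts
about `lqNorm` without its case distinction at `q = ∞`. -/
def seqNorm (s : ℝ) (a : ι → ℝ≥0∞) : ℝ≥0∞ := (∑' i, a i ^ s) ^ (1 / s)

lemma seqNorm_rpow {s : ℝ} (hs : 0 < s) (a : ι → ℝ≥0∞) : seqNorm s a ^ s = ∑' i, a i ^ s := by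
  rw [seqNorm, ← ENNReal.rpow_mul, one_div_mul_cancel hs.ne', ENNReal.rpow_one]

lemma le_seqNorm {s : ℝ} (hs : 0 < s) (a : ι → ℝ≥0∞) (i : ι) : a i ≤ seqNorm s a := by
  rw [← ENNReal.rpow_le_rpow_iff hs, seqNorm_rpow hs]
  exact ENNReal.le_tsum (f := fun i => a i ^ s) i

lemma measurable_seqNorm {α : Type*} [MeasurableSpace α] [Countable ι] {s : α → ℝ}
    (hs : Measurable s) {a : ι → α → ℝ≥0∞} (ha : ∀ i, Measurable (a i)) :
    Measurable fun x => seqNorm (s x) fun i => a i x := by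
  unfold seqNorm
  fun_prop

lemma seqNorm_div {s : ℝ} (hs : 0 < s) (a : ι → ℝ≥0∞) (r : ℝ≥0∞) :
    seqNorm s (fun i => a i / r) = seqNorm s a / r := by
  simp only [seqNorm, ENNReal.div_rpow_of_nonneg _ _ hs.le, div_eq_mul_inv (_ ^ s),
    ENNReal.tsum_mul_right]
  rw [← div_eq_mul_inv, ENNReal.div_rpow_of_nonneg _ _ (one_div_pos.2 hs).le, ← ENNReal.rpow_mul,
    mul_one_div_cancel hs.ne', ENNReal.rpow_one]

lemma tsum_div_seqNorm_rpow_le_one {s : ℝ} (hs : 0 < s) (a : ι → ℝ≥0∞) :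
    ∑' i, (a i / seqNorm s a) ^ s ≤ 1 := by
  rw [← seqNorm_rpow hs, seqNorm_div hs]
  exact ENNReal.rpow_le_one ENNReal.div_self_le_one hs.le

lemma seqNorm_eq_tsum_mul_div_rpow {s : ℝ} (hs : 1 ≤ s) {a : ι → ℝ≥0∞} (ha : seqNorm s a ≠ ∞) :
    seqNorm s a = ∑' i, a i * (a i / seqNorm s a) ^ (s - 1) := by
  have hs0 : 0 < s := zero_lt_one.trans_le hs
  set N := seqNorm s a with hN
  rcases eq_or_ne N 0 with h0 | h0
  · have hzero : ∀ i, a i = 0 := fun i => le_bot_iff.1 ((le_seqNorm hs0 a i).trans_eq h0)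
    simp only [h0, hzero, zero_mul, tsum_zero]
  · calc N = N * ∑' i, (a i / N) ^ s := by
          rw [← seqNorm_rpow hs0, seqNorm_div hs0, ← hN, ENNReal.div_self h0 ha, ENNReal.one_rpow,
            mul_one]
      _ = ∑' i, a i * (a i / N) ^ (s - 1) := by
          rw [← ENNReal.tsum_mul_left]
          refine tsum_congr fun i => ?_
          rw [rpow_eq_mul_rpow_sub_one hs, ← mul_assoc, ENNReal.mul_div_cancel h0 ha]

lemma seqNorm_ite_lt {s : ℝ} (hs : 0 < s) (a : ℕ → ℝ≥0∞) (k : ℕ) :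
    seqNorm s (fun i => if i < k then a i else 0) = (∑ i ∈ Finset.range k, a i ^ s) ^ (1 / s) := by
  rw [seqNorm, tsum_eq_sum (s := Finset.range k) fun i hi => by
    rw [if_neg (mt Finset.mem_range.2 hi), ENNReal.zero_rpow_of_pos hs]]
  exact congrArg (· ^ (1 / s))
    (Finset.sum_congr rfl fun i hi => by rw [if_pos (Finset.mem_range.1 hi)])

lemma monotone_seqNorm_ite_lt {s : ℝ} (hs : 0 < s) (a : ℕ → ℝ≥0∞) :
    Monotone fun k : ℕ => seqNorm s fun i => if i < k then a i else 0 := fun k l hkl => by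
  simp only [seqNorm_ite_lt hs]
  gcongr

lemma seqNorm_eq_iSup_ite_lt {s : ℝ} (hs : 0 < s) (a : ℕ → ℝ≥0∞) :
    seqNorm s a = ⨆ k : ℕ, seqNorm s fun i => if i < k then a i else 0 := by
  simp only [seqNorm_ite_lt hs]
  rw [seqNorm, ENNReal.tsum_eq_iSup_nat]
  exact (ENNReal.orderIsoRpow _ (one_div_pos.2 hs)).map_iSup _

lemma seqNorm_ite_lt_le {s : ℝ} (hs : 1 ≤ s) {a : ℕ → ℝ≥0∞} {B : ℝ≥0∞} (h : ∀ i, a i ≤ B)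
    (k : ℕ) : seqNorm s (fun i => if i < k then a i else 0) ≤ k * B := by
  have hs0 : 0 < s := zero_lt_one.trans_le hs
  rw [seqNorm_ite_lt hs0, one_div, ENNReal.rpow_inv_le_iff hs0,
    ENNReal.mul_rpow_of_nonneg _ _ hs0.le]
  calc ∑ i ∈ Finset.range k, a i ^ s ≤ k * B ^ s := by
        simpa using Finset.sum_le_card_nsmul (Finset.range k) (fun i => a i ^ s) (B ^ s)
          fun i _ => ENNReal.rpow_le_rpow (h i) hs0.le
    _ ≤ (k : ℝ≥0∞) ^ s * B ^ s := by
        gcongr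
        rcases k.eq_zero_or_pos with rfl | hk
        · simp
        · simpa using ENNReal.rpow_le_rpow_of_exponent_le (Nat.one_le_cast.2 hk) hs

end SeqNorm

section Duality

lemma lintegral_mul_le_add_of_holderConjugate {α : Type*} [MeasurableSpace α] {μ : Measure α}
    {p q : α → ℝ} (hpq : ∀ x, (p x).HolderConjugate (q x)) (hp : Measurable p)
    {f g : α → ℝ≥0∞} (hf : Measurable f) :
    ∫⁻ x, f x * g x ∂μ ≤ (∫⁻ x, f x ^ p x ∂μ) + ∫⁻ x, g x ^ q x ∂μ := by
  rw [← lintegral_add_left (hf.pow hp)]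
  refine lintegral_mono fun x => (ENNReal.young_inequality _ _ (hpq x)).trans (add_le_add ?_ ?_)
  · exact ENNReal.div_le_of_le_mul
      (le_mul_of_one_le_right zero_le (ENNReal.one_le_ofReal.2 (hpq x).lt.le))
  · exact ENNReal.div_le_of_le_mul
      (le_mul_of_one_le_right zero_le (ENNReal.one_le_ofReal.2 (hpq x).symm.lt.le))

/-- The extremal test function is `U ^ (P - 1)` scaled by `(∫ U ^ P) ^ (1 / b - 1)`, the power for
which its dual modular is at most `1` whatever the values of `P` below `b`. -/
lemma lintegral_rpow_le_of_forall_lintegral_mul_le {α : Type*} [MeasurableSpace α] {μ : Measure α}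
    {P : α → ℝ} {b : ℝ} (hPm : Measurable P) (hP1 : ∀ x, 1 < P x) (hb : 1 < b)
    (hPb : ∀ x, P x ≤ b) {U : α → ℝ≥0∞} (hU : Measurable U) (hUtop : ∫⁻ x, U x ^ P x ∂μ ≠ ∞)
    {C : ℝ≥0∞} (hC : 1 ≤ C)
    (h : ∀ G : α → ℝ≥0∞, Measurable G → ∫⁻ x, G x ^ Real.conjExponent (P x) ∂μ ≤ 1 →
      ∫⁻ x, G x * U x ∂μ ≤ C) :
    ∫⁻ x, U x ^ P x ∂μ ≤ C ^ b := by
  set K := ∫⁻ x, U x ^ P x ∂μ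
  have hb0 : 0 < b := zero_lt_one.trans hb
  rcases le_total K 1 with hK1 | hK1
  · exact hK1.trans (ENNReal.one_le_rpow hC hb0)
  have hK0 : K ≠ 0 := (zero_lt_one.trans_le hK1).ne'
  have hexp : 0 < 1 - b⁻¹ := sub_pos.2 (inv_lt_one_of_one_lt₀ hb)
  set κ := K ^ (1 - b⁻¹) with hκ
  have hκ0 : κ ≠ 0 := (ENNReal.rpow_pos (pos_iff_ne_zero.2 hK0) hUtop).ne'
  have hκtop : κ ≠ ∞ := ENNReal.rpow_ne_top_of_nonneg hexp.le hUtop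
  have hG : ∫⁻ x, (κ⁻¹ * U x ^ (P x - 1)) ^ Real.conjExponent (P x) ∂μ ≤ 1 := by
    calc ∫⁻ x, (κ⁻¹ * U x ^ (P x - 1)) ^ Real.conjExponent (P x) ∂μ
        ≤ ∫⁻ x, K⁻¹ * U x ^ P x ∂μ := by
          refine lintegral_mono fun x => ?_
          have hconj := Real.HolderConjugate.conjExponent (hP1 x)
          rw [ENNReal.mul_rpow_of_nonneg _ _ hconj.symm.nonneg, ← ENNReal.rpow_mul,
            hconj.sub_one_mul_conj, ENNReal.inv_rpow, hκ, ← ENNReal.rpow_mul]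
          gcongr
          refine (ENNReal.rpow_one K).ge.trans (ENNReal.rpow_le_rpow_of_exponent_le hK1 ?_)
          rw [← inv_le_iff_one_le_mul₀ hconj.symm.pos, ← hconj.one_sub_inv]
          gcongr
          exacts [hconj.pos, hPb x]
      _ = K⁻¹ * K := lintegral_const_mul _ (hU.pow hPm)
      _ ≤ 1 := ENNReal.inv_mul_le_one _
  have hKκ : K ≤ κ * C := by
    calc K = ∫⁻ x, κ * (κ⁻¹ * U x ^ (P x - 1) * U x) ∂μ := by
          refine lintegral_congr fun x => ?_
          rw [← mul_assoc, ← mul_assoc, ENNReal.mul_inv_cancel hκ0 hκtop, one_mul, mul_comm,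
            ← rpow_eq_mul_rpow_sub_one (hP1 x).le]
      _ = κ * ∫⁻ x, κ⁻¹ * U x ^ (P x - 1) * U x ∂μ := lintegral_const_mul' _ _ hκtop
      _ ≤ κ * C := by
          gcongr
          exact h _ (by fun_prop) hG
  rw [← ENNReal.rpow_inv_le_iff hb0]
  calc K ^ b⁻¹ = K / κ := by
        rw [hκ, ENNReal.rpow_sub _ _ hK0 hUtop, ENNReal.rpow_one, ENNReal.div_div_cancel hK0 hUtop]
    _ ≤ C := ENNReal.div_le_of_le_mul' hKκ

end Duality

section VectorValued

lemma LocLogHolder.exists_tsum_lconv_mul_rpow_le {Q : Rn n → ℝ} {b m m' : ℝ}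
    (hQ : LocLogHolder Q) (hQ1 : ∀ x, 1 ≤ Q x) (hQb : ∀ x, Q x ≤ b) (hm' : (n : ℝ) < m')
    (hm : m' < m) :
    ∃ C : ℝ≥0∞, C ≠ ∞ ∧ ∀ (F : Rn n → ℝ≥0∞) (a : ℕ → Rn n → ℝ≥0∞), Measurable F →
      (∀ ν, Measurable (a ν)) → (∀ y, ∑' ν, a ν y ^ Q y ≤ 1) →
      ∀ (x : Rn n) (t : ℕ → ℝ≥0∞), ∑' ν, t ν ^ Q x ≤ 1 →
        ∑' ν, lconv (etaK ν m) (fun y => F y * a ν y) x * t ν ^ (Q x - 1) ≤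
          C * (dyadicMaximal volume F x +
            ∑' ν, lconv (etaK ν m') (fun y => F y * a ν y ^ Q y) x) := by
  obtain ⟨C, hC, hη⟩ := exists_lconv_etaK_le_mul_dyadicMaximal hm'
  obtain ⟨E, ε, hE, hε, hpoint⟩ := hQ.exists_lconv_etaK_mul_rpow_le hQ1 hQb hm
  refine ⟨(1 + ∑' ν, ε ν) * C + E, by finiteness, fun F a hF ha hasum x t htsum => ?_⟩
  have ha1 : ∀ ν y, a ν y ≤ 1 := fun ν y => le_one_of_rpow_le_one (zero_lt_one.trans_le (hQ1 y))
    ((ENNReal.le_tsum (f := fun ν => a ν y ^ Q y) ν).trans (hasum y))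
  set R : ℕ → ℝ≥0∞ := fun ν => lconv (etaK ν m') (fun y => F y * a ν y ^ Q y) x
  calc ∑' ν, lconv (etaK ν m) (fun y => F y * a ν y) x * t ν ^ (Q x - 1)
      ≤ ∑' ν, ((t ν ^ Q x + ε ν) * (C * dyadicMaximal volume F x) + E * R ν) := by
        gcongr with ν
        refine (hpoint ν F (a ν) hF (ha ν) (ha1 ν) x _).trans ?_
        gcongr
        exact hη ν F hF x
    _ = ((∑' ν, t ν ^ Q x) + ∑' ν, ε ν) * (C * dyadicMaximal volume F x) + E * ∑' ν, R ν := by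
        rw [ENNReal.tsum_add, ENNReal.tsum_mul_right, ENNReal.tsum_add, ENNReal.tsum_mul_left]
    _ ≤ (1 + ∑' ν, ε ν) * C * dyadicMaximal volume F x + E * ∑' ν, R ν := by
        rw [mul_assoc]
        gcongr
    _ ≤ _ := by
        rw [mul_add]
        gcongr
        exacts [le_self_add, le_add_self]

lemma exists_lintegral_mul_tsum_lconv_mul_le {m : ℝ} (hm : (n : ℝ) < m) :
    ∃ C : ℝ≥0∞, C ≠ ∞ ∧ ∀ (F G : Rn n → ℝ≥0∞) (w : ℕ → Rn n → ℝ≥0∞), Measurable F →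
      Measurable G → (∀ ν, Measurable (w ν)) → (∀ x, ∑' ν, w ν x ≤ 1) →
      ∫⁻ x, G x * ∑' ν, lconv (etaK ν m) (fun y => F y * w ν y) x ≤
        C * ∫⁻ x, F x * dyadicMaximal volume G x := by
  obtain ⟨C, hC, hη⟩ := exists_lconv_etaK_le_mul_dyadicMaximal hm
  refine ⟨C, hC, fun F G w hF hG hw hwsum => ?_⟩
  have hηm : ∀ ν, Measurable (etaK ν m : Rn n → ℝ≥0∞) := fun ν => measurable_etaK ν m
  have hMG := measurable_dyadicMaximal volume G
  calc ∫⁻ x, G x * ∑' ν, lconv (etaK ν m) (fun y => F y * w ν y) x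
      = ∑' ν, ∫⁻ x, G x * lconv (etaK ν m) (fun y => F y * w ν y) x := by
        simp only [← ENNReal.tsum_mul_left]
        exact lintegral_tsum fun ν =>
          (hG.mul (measurable_lconv (hηm ν) (hF.mul (hw ν)))).aemeasurable
    _ = ∑' ν, ∫⁻ x, F x * w ν x * lconv (etaK ν m) G x := tsum_congr fun ν =>
        lintegral_mul_lconv_comm (hηm ν) (etaK_neg ν m) hG (hF.mul (hw ν))
    _ ≤ ∑' ν, ∫⁻ x, F x * w ν x * (C * dyadicMaximal volume G x) := by
        gcongr with ν x
        exact hη ν G hG x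
    _ = ∫⁻ x, F x * (∑' ν, w ν x) * (C * dyadicMaximal volume G x) := by
        rw [← lintegral_tsum fun ν => by fun_prop]
        simp only [ENNReal.tsum_mul_right, ENNReal.tsum_mul_left]
    _ ≤ ∫⁻ x, C * (F x * dyadicMaximal volume G x) := by
        refine lintegral_mono fun x => ?_
        rw [mul_left_comm C]
        gcongr
        exact mul_le_of_le_one_right' (hwsum x)
    _ = _ := lintegral_const_mul _ (hF.mul hMG)

lemma lconv_mul_div_seqNorm {Q : Rn n → ℝ} (hQ0 : ∀ x, 0 < Q x) {f : ℕ → Rn n → ℝ≥0∞}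
    (hf : ∀ᵐ x, seqNorm (Q x) (fun ν => f ν x) ≠ ∞) (g : Rn n → ℝ≥0∞) (ν : ℕ) (x : Rn n) :
    lconv g (fun y => seqNorm (Q y) (fun k => f k y) * (f ν y / seqNorm (Q y) fun k => f k y)) x =
      lconv g (f ν) x := by
  refine lintegral_congr_ae ?_
  filter_upwards [hf] with y hy
  rw [ENNReal.mul_div_cancel' (fun h0 => ?_) (fun htop => absurd htop hy)]
  exact le_bot_iff.1 ((le_seqNorm (hQ0 y) (fun k => f k y) ν).trans_eq h0)

lemma LocLogHolder.exists_lintegral_mul_seqNorm_lconv_le {Q : Rn n → ℝ} {b m : ℝ}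
    (hQ : LocLogHolder Q) (hQ1 : ∀ x, 1 ≤ Q x) (hQb : ∀ x, Q x ≤ b) (hm : (n : ℝ) < m) :
    ∃ C : ℝ≥0∞, C ≠ ∞ ∧ ∀ (f : ℕ → Rn n → ℝ≥0∞) (F G : Rn n → ℝ≥0∞), (∀ ν, Measurable (f ν)) →
      (∀ x, F x = seqNorm (Q x) fun ν => f ν x) → Measurable G → (∀ᵐ x, F x ≠ ∞) →
      (∀ᵐ x, seqNorm (Q x) (fun ν => lconv (etaK ν m) (f ν) x) ≠ ∞) →
      ∫⁻ x, G x * seqNorm (Q x) (fun ν => lconv (etaK ν m) (f ν) x) ≤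
        C * ((∫⁻ x, G x * dyadicMaximal volume F x) + ∫⁻ x, F x * dyadicMaximal volume G x) := by
  obtain ⟨m', hm', hm'm⟩ := exists_between hm
  obtain ⟨C₁, hC₁, hpoint⟩ := hQ.exists_tsum_lconv_mul_rpow_le hQ1 hQb hm' hm'm
  obtain ⟨C₂, hC₂, hdual⟩ := exists_lintegral_mul_tsum_lconv_mul_le hm'
  refine ⟨C₁ * (1 + C₂), by finiteness, fun f F G hf hFf hG hFtop hUtop => ?_⟩
  obtain rfl : F = fun x => seqNorm (Q x) fun ν => f ν x := funext hFf
  have hQ0 : ∀ x, 0 < Q x := fun x => zero_lt_one.trans_le (hQ1 x)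
  have hQm := hQ.continuous.measurable
  set F : Rn n → ℝ≥0∞ := fun x => seqNorm (Q x) fun ν => f ν x
  set U : Rn n → ℝ≥0∞ := fun x => seqNorm (Q x) fun ν => lconv (etaK ν m) (f ν) x
  have hF : Measurable F := measurable_seqNorm hQm hf
  have hMF := measurable_dyadicMaximal volume F
  set a : ℕ → Rn n → ℝ≥0∞ := fun ν x => f ν x / F x
  have ha : ∀ ν, Measurable (a ν) := fun ν => (hf ν).div hF
  have hasum : ∀ x, ∑' ν, a ν x ^ Q x ≤ 1 := fun x => tsum_div_seqNorm_rpow_le_one (hQ0 x) _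
  set R : Rn n → ℝ≥0∞ := fun x => ∑' ν, lconv (etaK ν m') (fun y => F y * a ν y ^ Q y) x
  have hU : ∀ᵐ x, U x ≤ C₁ * (dyadicMaximal volume F x + R x) := by
    filter_upwards [hUtop] with x hx
    calc U x = ∑' ν, lconv (etaK ν m) (fun y => F y * a ν y) x *
          (lconv (etaK ν m) (f ν) x / U x) ^ (Q x - 1) := by
          simp only [F, a, lconv_mul_div_seqNorm hQ0 hFtop]
          exact seqNorm_eq_tsum_mul_div_rpow (hQ1 x) hx
      _ ≤ _ := hpoint F a hF ha hasum x _ (tsum_div_seqNorm_rpow_le_one (hQ0 x) _)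
  calc ∫⁻ x, G x * U x
      ≤ ∫⁻ x, C₁ * (G x * dyadicMaximal volume F x + G x * R x) := by
        refine lintegral_mono_ae (hU.mono fun x hx => (mul_le_mul_right hx _).trans_eq ?_)
        ring
    _ = C₁ * ((∫⁻ x, G x * dyadicMaximal volume F x) + ∫⁻ x, G x * R x) := by
        rw [lintegral_const_mul' _ _ hC₁, lintegral_add_left (by fun_prop)]
    _ ≤ C₁ * ((∫⁻ x, G x * dyadicMaximal volume F x) +
          C₂ * ∫⁻ x, F x * dyadicMaximal volume G x) := by
        gcongr
        exact hdual F G _ hF hG (fun ν => (ha ν).pow hQm) hasum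
    _ ≤ _ := by
        rw [mul_assoc C₁, mul_add (1 + C₂)]
        gcongr
        · exact le_mul_of_one_le_left' le_self_add
        · exact le_add_self

lemma ae_ne_top_of_lintegral_rpow_ne_top {α : Type*} [MeasurableSpace α] {μ : Measure α}
    {P : α → ℝ} (hPm : Measurable P) (hP : ∀ x, 0 < P x) {f : α → ℝ≥0∞} (hf : Measurable f)
    (h : ∫⁻ x, f x ^ P x ∂μ ≠ ∞) : ∀ᵐ x ∂μ, f x ≠ ∞ := by
  filter_upwards [ae_lt_top (hf.pow hPm) h] with x hx
  exact ((ENNReal.rpow_lt_top_iff_of_pos (hP x)).1 hx).ne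

lemma lintegral_const_mul_rpow_ne_top {α : Type*} [MeasurableSpace α] {μ : Measure α}
    {P : α → ℝ} {b : ℝ} (hP : ∀ x, 0 ≤ P x) (hPb : ∀ x, P x ≤ b) {f : α → ℝ≥0∞} {c : ℝ≥0∞}
    (hc : c ≠ ∞) (h : ∫⁻ x, f x ^ P x ∂μ ≠ ∞) : ∫⁻ x, (c * f x) ^ P x ∂μ ≠ ∞ := by
  have hb : max c 1 ^ max b 0 ≠ ∞ :=
    ENNReal.rpow_ne_top_of_nonneg (le_max_right b 0) (max_lt hc.lt_top one_lt_top).ne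
  refine ne_top_of_le_ne_top (ENNReal.mul_ne_top hb h) ?_
  rw [← lintegral_const_mul' _ _ hb]
  refine lintegral_mono fun x => ?_
  rw [ENNReal.mul_rpow_of_nonneg _ _ (hP x)]
  gcongr
  calc c ^ P x ≤ max c 1 ^ P x := ENNReal.rpow_le_rpow (le_max_left c 1) (hP x)
    _ ≤ max c 1 ^ max b 0 := ENNReal.rpow_le_rpow_of_exponent_le (le_max_right c 1)
        (le_max_of_le_left (hPb x))

lemma IsLogHolderExponent.exists_lintegral_seqNorm_lconv_rpow_le_of_ne_top {P Q : Rn n → ℝ}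
    {b m : ℝ} (hP : IsLogHolderExponent P) (hQ : LocLogHolder Q) (hQ1 : ∀ x, 1 ≤ Q x)
    (hQb : ∀ x, Q x ≤ b) (hm : (n : ℝ) < m) :
    ∃ K : ℝ≥0∞, K ≠ ∞ ∧ ∀ f : ℕ → Rn n → ℝ≥0∞, (∀ ν, Measurable (f ν)) →
      ∫⁻ x, seqNorm (Q x) (fun ν => f ν x) ^ P x ≤ 1 →
      ∫⁻ x, seqNorm (Q x) (fun ν => lconv (etaK ν m) (f ν) x) ^ P x ≠ ∞ →
      ∫⁻ x, seqNorm (Q x) (fun ν => lconv (etaK ν m) (f ν) x) ^ P x ≤ K := by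
  obtain ⟨C, hC, hdual⟩ := hQ.exists_lintegral_mul_seqNorm_lconv_le hQ1 hQb hm
  obtain ⟨M, hM, hmax⟩ := hP.exists_lintegral_dyadicMaximal_rpow_le
  obtain ⟨M', hM', hmax'⟩ := hP.conjExponent.exists_lintegral_dyadicMaximal_rpow_le
  obtain ⟨β, hPβ⟩ := hP.exists_le
  have hβ : 1 < β := (hP.one_lt 0).trans_le (hPβ 0)
  have hP0 : ∀ x, 0 < P x := fun x => zero_lt_one.trans (hP.one_lt x)
  have hconj : ∀ x, (P x).HolderConjugate (Real.conjExponent (P x)) :=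
    fun x => Real.HolderConjugate.conjExponent (hP.one_lt x)
  refine ⟨max 1 (C * ((M + 1) + (1 + M'))) ^ β, ENNReal.rpow_ne_top_of_nonneg (by positivity)
    (max_lt one_lt_top (by finiteness)).ne, fun f hf hF1 hUtop => ?_⟩
  have hQm := hQ.continuous.measurable
  set F : Rn n → ℝ≥0∞ := fun x => seqNorm (Q x) fun ν => f ν x
  have hF : Measurable F := measurable_seqNorm hQm hf
  have hU := measurable_seqNorm hQm fun ν => measurable_lconv (measurable_etaK ν m) (hf ν)
  refine lintegral_rpow_le_of_forall_lintegral_mul_le hP.measurable hP.one_lt hβ hPβ hU hUtop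
    (le_max_left _ _) fun G hG hG1 => le_max_of_le_right ?_
  have hGMF : ∫⁻ x, G x * dyadicMaximal volume F x ≤ M + 1 := by
    simp only [mul_comm (G _)]
    exact (lintegral_mul_le_add_of_holderConjugate hconj hP.measurable
      (measurable_dyadicMaximal volume F)).trans (add_le_add (hmax F hF hF1) hG1)
  have hFMG : ∫⁻ x, F x * dyadicMaximal volume G x ≤ 1 + M' :=
    (lintegral_mul_le_add_of_holderConjugate hconj hP.measurable hF).trans
      (add_le_add hF1 (hmax' G hG hG1))
  refine (hdual f F G hf (fun _ => rfl) hG ?_ ?_).trans (by gcongr)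
  · exact ae_ne_top_of_lintegral_rpow_ne_top hP.measurable hP0 hF (hF1.trans_lt one_lt_top).ne
  · exact ae_ne_top_of_lintegral_rpow_ne_top hP.measurable hP0 hU hUtop

lemma lconv_ite (g f : Rn n → ℝ≥0∞) (c : Prop) [Decidable c] (x : Rn n) :
    lconv g (fun y => if c then f y else 0) x = if c then lconv g f x else 0 := by
  split_ifs <;> simp [lconv]

lemma IsLogHolderExponent.lintegral_seqNorm_ite_lconv_rpow_ne_top {P Q : Rn n → ℝ} {m : ℝ}
    (hP : IsLogHolderExponent P) (hQ1 : ∀ x, 1 ≤ Q x) (hQm : Measurable Q) (hm : (n : ℝ) < m)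
    {f : ℕ → Rn n → ℝ≥0∞} (hf : ∀ ν, Measurable (f ν))
    (hF : ∫⁻ x, seqNorm (Q x) (fun ν => f ν x) ^ P x ≤ 1) (k : ℕ) :
    ∫⁻ x, seqNorm (Q x) (fun ν => if ν < k then lconv (etaK ν m) (f ν) x else 0) ^ P x ≠ ∞ := by
  obtain ⟨C, hC, hη⟩ := exists_lconv_etaK_le_mul_dyadicMaximal hm
  obtain ⟨M, hM, hmax⟩ := hP.exists_lintegral_dyadicMaximal_rpow_le
  obtain ⟨β, hPβ⟩ := hP.exists_le
  have hP0 : ∀ x, 0 ≤ P x := fun x => zero_le_one.trans (hP.one_lt x).le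
  set F : Rn n → ℝ≥0∞ := fun x => seqNorm (Q x) fun ν => f ν x
  have hFm : Measurable F := measurable_seqNorm hQm hf
  have hle : ∀ x ν, lconv (etaK ν m) (f ν) x ≤ C * dyadicMaximal volume F x := fun x ν =>
    (lconv_mono _ (fun y => le_seqNorm (zero_lt_one.trans_le (hQ1 y)) _ ν) x).trans (hη ν F hFm x)
  refine ne_top_of_le_ne_top (lintegral_const_mul_rpow_ne_top hP0 hPβ
    (c := k * C) (by finiteness) (ne_top_of_le_ne_top hM (hmax F hFm hF)))
    (lintegral_mono fun x => ENNReal.rpow_le_rpow ?_ (hP0 x))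
  rw [mul_assoc]
  exact seqNorm_ite_lt_le (hQ1 x) (hle x) k

theorem IsLogHolderExponent.exists_lintegral_seqNorm_lconv_rpow_le {P Q : Rn n → ℝ} {b m : ℝ}
    (hP : IsLogHolderExponent P) (hQ : LocLogHolder Q) (hQ1 : ∀ x, 1 ≤ Q x)
    (hQb : ∀ x, Q x ≤ b) (hm : (n : ℝ) < m) :
    ∃ K : ℝ≥0∞, K ≠ ∞ ∧ ∀ f : ℕ → Rn n → ℝ≥0∞, (∀ ν, Measurable (f ν)) →
      ∫⁻ x, seqNorm (Q x) (fun ν => f ν x) ^ P x ≤ 1 →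
      ∫⁻ x, seqNorm (Q x) (fun ν => lconv (etaK ν m) (f ν) x) ^ P x ≤ K := by
  obtain ⟨K, hK, hle⟩ :=
    hP.exists_lintegral_seqNorm_lconv_rpow_le_of_ne_top hQ hQ1 hQb hm
  refine ⟨K, hK, fun f hf hF => ?_⟩
  have hQm := hQ.continuous.measurable
  have hQ0 : ∀ x, 0 < Q x := fun x => zero_lt_one.trans_le (hQ1 x)
  have hP0 : ∀ x, 0 < P x := fun x => zero_lt_one.trans (hP.one_lt x)
  set U : ℕ → Rn n → ℝ≥0∞ := fun k x =>
    seqNorm (Q x) fun ν => if ν < k then lconv (etaK ν m) (f ν) x else 0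
  have hU : ∀ k, Measurable (U k) := fun k => measurable_seqNorm hQm fun ν => by
    split_ifs
    exacts [measurable_lconv (measurable_etaK ν m) (hf ν), measurable_const]
  have hmono : Monotone fun k x => U k x ^ P x := fun k l hkl x =>
    ENNReal.rpow_le_rpow (monotone_seqNorm_ite_lt (hQ0 x) _ hkl) (hP0 x).le
  have hUK : ∀ k, ∫⁻ x, U k x ^ P x ≤ K := fun k => by
    have htrunc := hle (fun ν y => if ν < k then f ν y else 0) fun ν => by
      split_ifs
      exacts [hf ν, measurable_const]
    simp only [lconv_ite] at htrunc
    refine htrunc (hF.trans' (lintegral_mono fun x => ENNReal.rpow_le_rpow ?_ (hP0 x).le))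
      (hP.lintegral_seqNorm_ite_lconv_rpow_ne_top hQ1 hQm hm hf hF k)
    exact (le_iSup _ k).trans_eq (seqNorm_eq_iSup_ite_lt (hQ0 x) _).symm
  calc ∫⁻ x, seqNorm (Q x) (fun ν => lconv (etaK ν m) (f ν) x) ^ P x
      = ∫⁻ x, ⨆ k, U k x ^ P x := lintegral_congr fun x => by
        rw [seqNorm_eq_iSup_ite_lt (hQ0 x)]
        exact (ENNReal.orderIsoRpow _ (hP0 x)).map_iSup _
    _ = ⨆ k, ∫⁻ x, U k x ^ P x := lintegral_iSup (fun k => (hU k).pow hP.measurable) hmono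
    _ ≤ K := iSup_le hUK

end VectorValued

section ExtendedExponents

lemma mem_Icc_essInf_essSup_of_continuous_inv {X : Type*} [TopologicalSpace X]
    [MeasurableSpace X] {μ : Measure X} [μ.IsOpenPosMeasure] {q : X → ℝ≥0∞}
    (hcont : Continuous fun x => (q x)⁻¹.toReal) (hInf : essInf q μ ≠ 0) (hSup : essSup q μ ≠ ∞)
    (x : X) : q x ∈ Set.Icc (essInf q μ) (essSup q μ) := by
  have hdense : Dense {y | essInf q μ ≤ q y ∧ q y ≤ essSup q μ} :=
    Measure.dense_of_ae ((ae_essInf_le (f := q) (μ := μ)).and (ENNReal.ae_le_essSup q))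
  have hSup0 : essSup q μ ≠ 0 := by
    obtain ⟨y, hy, -⟩ := hdense.exists_mem_open isOpen_univ ⟨x, trivial⟩
    exact ((pos_iff_ne_zero.2 hInf).trans_le (hy.1.trans hy.2)).ne'
  have hinv : (q x)⁻¹.toReal ∈ Set.Icc (essSup q μ)⁻¹.toReal (essInf q μ)⁻¹.toReal := by
    refine (isClosed_Icc.preimage hcont).closure_subset_iff.2 (fun y hy => ?_) (hdense x)
    have hfin : (q y)⁻¹ ≠ ∞ :=
      ENNReal.inv_ne_top.2 ((pos_iff_ne_zero.2 hInf).trans_le hy.1).ne'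
    exact ⟨ENNReal.toReal_mono hfin (ENNReal.inv_le_inv.2 hy.2),
      ENNReal.toReal_mono (ENNReal.inv_ne_top.2 hInf) (ENNReal.inv_le_inv.2 hy.1)⟩
  have hSup_inv : 0 < (essSup q μ)⁻¹.toReal :=
    ENNReal.toReal_pos (ENNReal.inv_ne_zero.2 hSup) (ENNReal.inv_ne_top.2 hSup0)
  have hq : (q x)⁻¹ ≠ ∞ := (ENNReal.toReal_pos_iff.1 (hSup_inv.trans_le hinv.1)).2.ne
  exact ⟨ENNReal.inv_le_inv.1
      ((ENNReal.toReal_le_toReal hq (ENNReal.inv_ne_top.2 hInf)).1 hinv.2),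
    ENNReal.inv_le_inv.1 ((ENNReal.toReal_le_toReal (ENNReal.inv_ne_top.2 hSup0) hq).1 hinv.1)⟩

lemma LocLogHolder.toReal {q : Rn n → ℝ≥0∞} {b : ℝ} (hq : LocLogHolder fun x => (q x)⁻¹.toReal)
    (hq0 : ∀ x, 0 < (q x).toReal) (hqb : ∀ x, (q x).toReal ≤ b) :
    LocLogHolder fun x => (q x).toReal := by
  have hb : 0 < b := (hq0 0).trans_le (hqb 0)
  have hmem : ∀ x, (q x)⁻¹.toReal ∈ Set.Ici b⁻¹ := fun x => by
    rw [ENNReal.toReal_inv]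
    exact inv_anti₀ (hq0 x) (hqb x)
  simpa only [ENNReal.toReal_inv, inv_inv] using
    hq.comp_lipschitzOnWith (lipschitzOnWith_inv_Ici (inv_pos.2 hb)) hmem

lemma LogDecay.toReal {q : Rn n → ℝ≥0∞} {b gInf c : ℝ}
    (hq : LogDecay (fun x => (q x)⁻¹.toReal) gInf c) (hq0 : ∀ x, 0 < (q x).toReal)
    (hqb : ∀ x, (q x).toReal ≤ b) :
    ∃ qInf c', LogDecay (fun x => (q x).toReal) qInf c' := by
  have hb : 0 < b := (hq0 0).trans_le (hqb 0)
  have hmem : ∀ x, (q x)⁻¹.toReal ∈ Set.Ici b⁻¹ := fun x => by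
    rw [ENNReal.toReal_inv]
    exact inv_anti₀ (hq0 x) (hqb x)
  exact ⟨_, _, by
    simpa only [ENNReal.toReal_inv, inv_inv] using (hq.max_of_le hmem).comp_lipschitzOnWith
      (lipschitzOnWith_inv_Ici (inv_pos.2 hb)) hmem (le_max_left b⁻¹ gInf)⟩

lemma IsPLog.isLogHolderExponent_toReal {p : Rn n → ℝ≥0∞} (hp : IsPLog p)
    (hpm : 1 < essInf p (volume : Measure (Rn n)))
    (hpp : essSup p (volume : Measure (Rn n)) < ∞) :
    IsLogHolderExponent fun x => (p x).toReal := by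
  obtain ⟨gInf, -, hloc, c, -, hdecay⟩ := hp
  have hmem := mem_Icc_essInf_essSup_of_continuous_inv hloc.continuous
    (zero_lt_one.trans hpm).ne' hpp.ne
  have hptop : ∀ x, p x ≠ ∞ := fun x => ne_top_of_le_ne_top hpp.ne (hmem x).2
  have hlower := fun x => ENNReal.toReal_mono (hptop x) (hmem x).1
  have hupper := fun x => ENNReal.toReal_mono hpp.ne (hmem x).2
  have hInf : 1 < (essInf p (volume : Measure (Rn n))).toReal := by
    simpa using (ENNReal.toReal_lt_toReal ENNReal.one_ne_top
      (ne_top_of_le_ne_top (hptop 0) (hmem 0).1)).2 hpm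
  have hp0 : ∀ x, 0 < (p x).toReal := fun x => zero_lt_one.trans (hInf.trans_le (hlower x))
  exact ⟨⟨_, hInf, hlower⟩, ⟨_, hupper⟩, hloc.toReal hp0 hupper, hdecay.toReal hp0 hupper⟩

end ExtendedExponents

section Luxemburg

lemma phiVE_of_ne_top {t : ℝ≥0∞} (ht : t ≠ ∞) (s : ℝ≥0∞) : phiVE t s = s ^ t.toReal := if_neg ht

lemma lqNorm_of_ne_top {q : ℝ≥0∞} (hq : q ≠ ∞) (a : ℕ → ℝ≥0∞) : lqNorm q a = seqNorm q.toReal a :=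
  if_neg hq

lemma lconv_div (f g : Rn n → ℝ≥0∞) {r : ℝ≥0∞} (hr : r ≠ 0) (x : Rn n) :
    lconv f (fun y => g y / r) x = lconv f g x / r := by
  simp only [lconv, div_eq_mul_inv, ← mul_assoc]
  exact lintegral_mul_const' _ _ (ENNReal.inv_ne_top.2 hr)

lemma modularVE_mono {p : Rn n → ℝ≥0∞} {f g : Rn n → ℝ≥0∞} (h : ∀ x, f x ≤ g x) :
    modularVE p f ≤ modularVE p g := by
  refine lintegral_mono fun x => ?_
  unfold phiVE
  split_ifs with _ hf hg hg
  · exact le_rfl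
  · exact zero_le
  · exact absurd ((h x).trans hg) hf
  · exact le_rfl
  · exact ENNReal.rpow_le_rpow (h x) ENNReal.toReal_nonneg

lemma modularVE_div_le_one {p : Rn n → ℝ≥0∞} (hp : ∀ x, p x ≠ ∞) (hp1 : ∀ x, 1 ≤ (p x).toReal)
    {g : Rn n → ℝ≥0∞} {K : ℝ≥0∞} (hK1 : 1 ≤ K) (h : modularVE p g ≤ K) :
    modularVE p (fun x => g x / K) ≤ 1 := by
  have hK0 : K ≠ 0 := (zero_lt_one.trans_le hK1).ne'
  calc modularVE p (fun x => g x / K) ≤ ∫⁻ x, phiVE (p x) (g x) * K⁻¹ := by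
        refine lintegral_mono fun x => ?_
        rw [phiVE_of_ne_top (hp x), phiVE_of_ne_top (hp x),
          ENNReal.div_rpow_of_nonneg _ _ ENNReal.toReal_nonneg, div_eq_mul_inv]
        gcongr
        exact ENNReal.le_rpow_self_of_one_le hK1 (hp1 x)
    _ = modularVE p g * K⁻¹ := lintegral_mul_const' _ _ (ENNReal.inv_ne_top.2 hK0)
    _ ≤ K * K⁻¹ := by gcongr
    _ ≤ 1 := ENNReal.mul_inv_le_one K

lemma vLpNorm_le_mul_of_modularVE_le {p : Rn n → ℝ≥0∞} (hp : ∀ x, p x ≠ ∞)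
    (hp1 : ∀ x, 1 ≤ (p x).toReal) {f g : Rn n → ℝ≥0∞} {K : ℝ≥0∞} (hK1 : 1 ≤ K) (hK : K ≠ ∞)
    (h : ∀ r : ℝ≥0∞, r ≠ 0 → modularVE p (fun x => f x / r) ≤ 1 →
      modularVE p (fun x => g x / r) ≤ K) :
    vLpNorm p g ≤ K * vLpNorm p f := by
  have hK0 : K ≠ 0 := (zero_lt_one.trans_le hK1).ne'
  rw [mul_comm, ← ENNReal.div_le_iff hK0 hK]
  refine le_of_forall_gt_imp_ge_of_dense fun r hr => ?_
  obtain ⟨s, hs, hsr⟩ := sInf_lt_iff.1 hr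
  have hfr : modularVE p (fun x => f x / r) ≤ 1 :=
    (modularVE_mono fun x => by gcongr).trans hs
  have hgr := modularVE_div_le_one hp hp1 hK1 (h r (zero_le.trans_lt hsr).ne' hfr)
  rw [ENNReal.div_le_iff hK0 hK]
  refine sInf_le (hgr.trans_eq' (congrArg (modularVE p) (funext fun x => ?_)))
  simp only [div_eq_mul_inv]
  rw [ENNReal.mul_inv (Or.inr hK) (Or.inr hK0), mul_assoc]

end Luxemburg

theorem statement1_general (n : ℕ) (p q : Rn n → ℝ≥0∞)
    (hp : IsPLog p) (hq : LocLogHolder fun x => (q x)⁻¹.toReal)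
    (hpm : 1 < essInf p (volume : Measure (Rn n)))
    (hpp : essSup p (volume : Measure (Rn n)) < ∞)
    (hqm : 1 ≤ essInf q (volume : Measure (Rn n)))
    (hqp : essSup q (volume : Measure (Rn n)) < ∞)
    (m : ℝ) (hm : (n : ℝ) < m) :
    ∃ c : ℝ, 0 < c ∧ ∀ f : ℕ → Rn n → ℝ≥0∞, (∀ ν, Measurable (f ν)) →
      vLpNorm p (fun x => lqNorm (q x) (fun ν => lconv (etaK ν m) (f ν) x)) ≤
        ENNReal.ofReal c * vLpNorm p (fun x => lqNorm (q x) (fun ν => f ν x)) := by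
  have hP := hp.isLogHolderExponent_toReal hpm hpp
  have hptop : ∀ x, p x ≠ ∞ := fun x =>
    (ENNReal.toReal_pos_iff.1 (zero_lt_one.trans (hP.one_lt x))).2.ne
  have hqmem := mem_Icc_essInf_essSup_of_continuous_inv hq.continuous
    (zero_lt_one.trans_le hqm).ne' hqp.ne
  have hqtop : ∀ x, q x ≠ ∞ := fun x => ne_top_of_le_ne_top hqp.ne (hqmem x).2
  have hQ1 : ∀ x, 1 ≤ (q x).toReal := fun x => by
    simpa using ENNReal.toReal_mono (hqtop x) (hqm.trans (hqmem x).1)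
  have hQb := fun x => ENNReal.toReal_mono hqp.ne (hqmem x).2
  have hQ0 : ∀ x, 0 < (q x).toReal := fun x => zero_lt_one.trans_le (hQ1 x)
  obtain ⟨K, hK, hmod⟩ :=
    hP.exists_lintegral_seqNorm_lconv_rpow_le (hq.toReal hQ0 hQb) hQ1 hQb hm
  have hKmax : max 1 K ≠ ∞ := (max_lt one_lt_top hK.lt_top).ne
  refine ⟨(max 1 K).toReal, ENNReal.toReal_pos (by simp) hKmax, fun f hf => ?_⟩
  rw [ENNReal.ofReal_toReal hKmax]
  refine vLpNorm_le_mul_of_modularVE_le hptop (fun x => (hP.one_lt x).le) (le_max_left _ _) hKmax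
    fun r hr hfr => le_max_of_le_right ?_
  have hmodr := hmod (fun ν x => f ν x / r) fun ν => (hf ν).div_const r
  simp only [lconv_div _ _ hr, seqNorm_div (hQ0 _)] at hmodr
  simp only [modularVE, phiVE_of_ne_top (hptop _), lqNorm_of_ne_top (hqtop _)] at hfr ⊢
  exact hmodr hfr

/-- the convolution inequality of Diening–Hästö–Roudenko in variable
exponent Lebesgue spaces. -/
theorem statement1 (n : ℕ) (p q : Rn n → ℝ≥0∞)
    (hp : IsPLog p) (hq : IsPLog q)
    (hpm : 1 < essInf p (volume : Measure (Rn n)))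
    (hpp : essSup p (volume : Measure (Rn n)) < ∞)
    (hqm : 1 < essInf q (volume : Measure (Rn n)))
    (hqp : essSup q (volume : Measure (Rn n)) < ∞)
    (m : ℝ) (hm : (n : ℝ) < m) :
    ∃ c : ℝ, 0 < c ∧ ∀ f : ℕ → Rn n → ℝ≥0∞, (∀ ν, Measurable (f ν)) →
      vLpNorm p (fun x => lqNorm (q x) (fun ν => lconv (etaK ν m) (f ν) x)) ≤
        ENNReal.ofReal c * vLpNorm p (fun x => lqNorm (q x) (fun ν => f ν x)) := by
  obtain ⟨-, -, hqloc, -⟩ := hq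
  exact statement1_general n p q hp hqloc hpm hpp hqm.le hqp m hm

end
end
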